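/- Let f be a rational map of degree at least 2 whose Julia set J contains no critical points of f, and let x ∈ J satisfy χ̄(x) > 0. Then there exists a constant K > 0 (depending only on f) such that for every q ∈ [χ̲(x), χ̄(x)]\{0} there exist a number δ > 0 (depending on q but not on x) and a sequence n_k → ∞ such that: (i) lim_{k→∞} (1/n_k)·log|(f^{n_k})'(x)| = q, and (ii) the distortion of f^{n_k} on the pullback f_x^{-n_k}(B(f^{n_k}(x), δ)) is less than K, where f_x^{-n_k} is the inverse branch of f^{n_k} sending f^{n_k}(x) to x. -/

import Mathlib

open Filter Set Metric MeasureTheory Topology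
open scoped ENNReal NNReal

noncomputable section

/-! ### The Riemann sphere with the chordal (spherical) metric -/

/-- The Riemann sphere `ℂ ∪ {∞}`. -/
structure RSphere : Type where
  val : Option ℂ

namespace RSphere

/-- The inclusion of `ℂ` into the Riemann sphere. -/
def ofC (z : ℂ) : RSphere := ⟨some z⟩

/-- The point at infinity. -/
def infty : RSphere := ⟨none⟩

/-- Case elimination on a point of the Riemann sphere. -/
def elim {α : Sort*} (x : RSphere) (i : α) (h : ℂ → α) : α := Option.elim x.val i h

/-- Stereographic embedding of the Riemann sphere onto the round unit sphere in
`ℝ³ = ℂ ×₂ ℝ`.  It induces the chordal (spherical) metric on `RSphere`. -/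
def embed (x : RSphere) : WithLp 2 (ℂ × ℝ) :=
  elim x ((WithLp.equiv 2 (ℂ × ℝ)).symm (0, 1))
    fun z => (WithLp.equiv 2 (ℂ × ℝ)).symm
      (((2 / (‖z‖ ^ 2 + 1)) : ℝ) • z, (‖z‖ ^ 2 - 1) / (‖z‖ ^ 2 + 1))

/-- Inverse of the stereographic embedding. -/
def unembed (v : WithLp 2 (ℂ × ℝ)) : RSphere :=
  if (WithLp.equiv 2 (ℂ × ℝ) v).2 = 1 then infty
  else ofC ((1 - (WithLp.equiv 2 (ℂ × ℝ) v).2)⁻¹ • (WithLp.equiv 2 (ℂ × ℝ) v).1)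

lemma leftInverse_unembed : Function.LeftInverse unembed embed := by
  rintro ⟨x⟩
  cases x with
  | none =>
      simp [embed, unembed, elim, infty]
  | some z =>
      have h1 : (0 : ℝ) < ‖z‖ ^ 2 + 1 := by positivity
      have ht : (‖z‖ ^ 2 - 1) / (‖z‖ ^ 2 + 1) ≠ 1 := by
        intro h
        rw [div_eq_one_iff_eq h1.ne'] at h
        linarith
      simp only [embed, unembed, elim, Option.elim, Equiv.apply_symm_apply, ht, if_false, ofC]
      congr 2
      rw [smul_smul]
      have h2 : 1 - (‖z‖ ^ 2 - 1) / (‖z‖ ^ 2 + 1) = 2 / (‖z‖ ^ 2 + 1) := by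
        field_simp
        ring
      rw [h2]
      rw [inv_mul_cancel₀ (by positivity), one_smul]

lemma embed_injective : Function.Injective embed := leftInverse_unembed.injective

/-- The chordal metric on the Riemann sphere, induced by the stereographic embedding
onto the round unit sphere in Euclidean 3-space. -/
instance : MetricSpace RSphere := MetricSpace.induced embed embed_injective inferInstance

instance : MeasurableSpace RSphere := borel RSphere

instance : BorelSpace RSphere := ⟨rfl⟩

/-- Reading off a finite point (junk value `0` at `∞`). -/
def toC (x : RSphere) : ℂ := elim x 0 id

/-- The involution `z ↦ 1/z` of the Riemann sphere. -/
def inv (x : RSphere) : RSphere :=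
  elim x (ofC 0) fun z => if z = 0 then infty else ofC z⁻¹

end RSphere

/-! ### Basic dynamical notions -/

/-- The norm of the derivative of `g` at `x`, measured in the spherical metric
(for a rational map this is the usual norm of the spherical derivative). -/
def sphDeriv (g : RSphere → RSphere) (x : RSphere) : ℝ :=
  limsup (fun y => dist (g y) (g x) / dist y x) (𝓝[≠] x)

/-- The set of critical points. -/
def critSet (g : RSphere → RSphere) : Set RSphere := {x | sphDeriv g x = 0}

/-- The Fatou set: points having a neighbourhood on which the family of iterates is
equicontinuous (i.e. normal). -/
def fatouSet (f : RSphere → RSphere) : Set RSphere :=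
  {x | ∃ U : Set RSphere, IsOpen U ∧ x ∈ U ∧ EquicontinuousOn (fun n : ℕ => f^[n]) U}

/-- The Julia set. -/
def juliaSet (f : RSphere → RSphere) : Set RSphere := (fatouSet f)ᶜ

/-- `f` is the rational map on the Riemann sphere given by the coprime pair of
polynomials `p`, `q`. -/
structure IsRationalMap (f : RSphere → RSphere) (p q : Polynomial ℂ) : Prop where
  coprime : IsCoprime p q
  continuous : Continuous f
  eval : ∀ z : ℂ, q.eval z ≠ 0 → f (RSphere.ofC z) = RSphere.ofC (p.eval z / q.eval z)

/-- The degree of the rational map `p/q`. -/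
def ratDeg (p q : Polynomial ℂ) : ℕ := max p.natDegree q.natDegree

/-- The lower Lyapunov exponent `χ̲(x) = liminf (1/n) log |(fⁿ)'(x)|`, as an extended real. -/
def lyapLower (f : RSphere → RSphere) (x : RSphere) : EReal :=
  liminf (fun n : ℕ => ((Real.log (sphDeriv (f^[n]) x) / n : ℝ) : EReal)) atTop

/-- The upper Lyapunov exponent `χ̄(x) = limsup (1/n) log |(fⁿ)'(x)|`, as an extended real. -/
def lyapUpper (f : RSphere → RSphere) (x : RSphere) : EReal :=
  limsup (fun n : ℕ => ((Real.log (sphDeriv (f^[n]) x) / n : ℝ) : EReal)) atTop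

/-- The level set `𝓛(a,b)` of points of the Julia set with lower exponent `a` and
upper exponent `b`. -/
def levelSet (f : RSphere → RSphere) (a b : EReal) : Set RSphere :=
  {x | x ∈ juliaSet f ∧ lyapLower f x = a ∧ lyapUpper f x = b}

/-- The set `𝓛̂(α,β)` of points of the Julia set with `χ̲ ≤ β`, `χ̄ ≥ α` and `χ̄ > 0`. -/
def levelHat (f : RSphere → RSphere) (α β : ℝ) : Set RSphere :=
  {x | x ∈ juliaSet f ∧ lyapLower f x ≤ (β : EReal) ∧ (α : EReal) ≤ lyapUpper f x ∧
    0 < lyapUpper f x}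

/-- Birkhoff sum `S_m φ = φ + φ∘g + ⋯ + φ∘g^{m-1}`. -/
def birkhoff (g : RSphere → RSphere) (φ : RSphere → ℝ) (m : ℕ) (x : RSphere) : ℝ :=
  ∑ k ∈ Finset.range m, φ (g^[k] x)

/-- An `(m,ε)`-separated finite subset of `Λ` for the map `g`. -/
def IsSepSet (g : RSphere → RSphere) (Λ : Set RSphere) (m : ℕ) (ε : ℝ)
    (E : Finset RSphere) : Prop :=
  ↑E ⊆ Λ ∧ ∀ x ∈ E, ∀ y ∈ E, x ≠ y → ∃ k < m, ε ≤ dist (g^[k] x) (g^[k] y)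

/-- Topological pressure of the potential `φ` for `g` restricted to `Λ`,
defined à la Bowen via `(m,ε)`-separated sets. -/
def pressureOn (g : RSphere → RSphere) (Λ : Set RSphere) (φ : RSphere → ℝ) : ℝ :=
  ⨆ ε : {ε : ℝ // 0 < ε}, limsup (fun m : ℕ =>
    Real.log (⨆ E : {E : Finset RSphere // IsSepSet g Λ m ε.1 E},
      ∑ x ∈ E.1, Real.exp (birkhoff g φ m x)) / m) atTop

/-- `g` is uniformly expanding on `Λ`: `|(gᵐ)'(x)| ≥ c λᵐ` for some `c > 0`, `λ > 1`. -/
def ExpandingOn (g : RSphere → RSphere) (Λ : Set RSphere) : Prop :=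
  ∃ c > (0 : ℝ), ∃ l : ℝ, 1 < l ∧ ∀ x ∈ Λ, ∀ m : ℕ, 1 ≤ m → c * l ^ m ≤ sphDeriv (g^[m]) x

/-- `Λ` is a repeller for `g`: a compact invariant isolated set. -/
def IsRepeller (g : RSphere → RSphere) (Λ : Set RSphere) : Prop :=
  IsCompact Λ ∧ g '' Λ = Λ ∧
    ∃ U : Set RSphere, IsOpen U ∧ Λ ⊆ U ∧ ∀ x, (∀ m : ℕ, g^[m] x ∈ U) → x ∈ Λ

/-- Topological transitivity of `g` on `Λ`. -/
def TopTransOn (g : RSphere → RSphere) (Λ : Set RSphere) : Prop :=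
  ∀ U V : Set RSphere, IsOpen U → IsOpen V → (U ∩ Λ).Nonempty → (V ∩ Λ).Nonempty →
    ∃ m : ℕ, (g^[m] '' (U ∩ Λ) ∩ V).Nonempty

/-- The topological pressure of `φ` with respect to `f` on its Julia set, given by
the supremum of the pressures on compact invariant uniformly expanding subsets of `J`. -/
def pressureTop (f : RSphere → RSphere) (φ : RSphere → ℝ) : ℝ :=
  ⨆ L : {L : Set RSphere //
      L.Nonempty ∧ L ⊆ juliaSet f ∧ IsCompact L ∧ f '' L = L ∧ ExpandingOn f L},
    pressureOn f L.1 φ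

/-- The pressure function `d ↦ P(φ_d)` where `φ_d = -d log|f'|`. -/
def pressFamily (f : RSphere → RSphere) (d : ℝ) : ℝ :=
  pressureTop f fun x => -d * Real.log (sphDeriv f x)

/-- `F(α) = α⁻¹ inf_d (Q(d) + dα)` associated with a pressure function `Q` (for `α ≠ 0`). -/
def specF (Q : ℝ → ℝ) (α : ℝ) : EReal :=
  ((α⁻¹ : ℝ) : EReal) * ⨅ d : ℝ, ((Q d + d * α : ℝ) : EReal)

/-- `F(0) = lim_{α → 0⁺} F(α)`. -/
def specF0 (Q : ℝ → ℝ) : EReal := limsup (fun α : ℝ => specF Q α) (𝓝[>] (0 : ℝ))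

/-- The full spectrum function `F` associated with a pressure function `Q`. -/
def specFext (Q : ℝ → ℝ) (α : ℝ) : EReal := if α = 0 then specF0 Q else specF Q α

/-- The Lyapunov spectrum function `F` of `f`. -/
def Ffun (f : RSphere → RSphere) (α : ℝ) : EReal := specFext (pressFamily f) α

/-- `α⁻ = lim_{d → +∞} -Q(d)/d` for a pressure function `Q`. -/
def alphaMinusOf (Q : ℝ → ℝ) : ℝ := limsup (fun d : ℝ => -Q d / d) atTop

/-- `α⁺ = lim_{d → -∞} -Q(d)/d` for a pressure function `Q`. -/
def alphaPlusOf (Q : ℝ → ℝ) : ℝ := limsup (fun d : ℝ => -Q d / d) atBot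

/-- `α⁻` for the map `f`. -/
def alphaMinus (f : RSphere → RSphere) : ℝ := alphaMinusOf (pressFamily f)

/-- `α⁺` for the map `f`. -/
def alphaPlus (f : RSphere → RSphere) : ℝ := alphaPlusOf (pressFamily f)

/-- The Lyapunov exponent `χ(μ) = ∫ log|g'| dμ` of a measure. -/
def lyapMeas (g : RSphere → RSphere) (μ : Measure RSphere) : ℝ :=
  ∫ x, Real.log (sphDeriv g x) ∂μ

/-- `α⁻` as the infimum of Lyapunov exponents of invariant probability measures on `J`. -/
def alphaMinusMeas (f : RSphere → RSphere) : ℝ :=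
  sInf {r : ℝ | ∃ μ : Measure RSphere, IsProbabilityMeasure μ ∧ MeasurePreserving f μ μ ∧
    μ (juliaSet f)ᶜ = 0 ∧ r = lyapMeas f μ}

/-- `α⁺` as the supremum of Lyapunov exponents of invariant probability measures on `J`. -/
def alphaPlusMeas (f : RSphere → RSphere) : ℝ :=
  sSup {r : ℝ | ∃ μ : Measure RSphere, IsProbabilityMeasure μ ∧ MeasurePreserving f μ μ ∧
    μ (juliaSet f)ᶜ = 0 ∧ r = lyapMeas f μ}

/-- The maximal distortion `sup_{x,y ∈ Z} |g'(x)|/|g'(y)|` of `g` on `Z`. -/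
def distortionOn (g : RSphere → RSphere) (Z : Set RSphere) : ℝ :=
  sSup {r : ℝ | ∃ x ∈ Z, ∃ y ∈ Z, r = sphDeriv g x / sphDeriv g y}

/-- Conical points. -/
def IsConical (f : RSphere → RSphere) (x : RSphere) : Prop :=
  ∃ r : ℝ, 0 < r ∧ ∃ K : ℝ, ∃ n : ℕ → ℕ, StrictMono n ∧ ∃ U : ℕ → Set RSphere,
    ∀ i, U i ∈ 𝓝 x ∧ ball (f^[n i] x) r ⊆ f^[n i] '' U i ∧ distortionOn (f^[n i]) (U i) ≤ K

/-- A non-immediately postcritical point: there is a backward orbit through it that is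
dense in the Julia set and avoids the critical points. -/
def NonImmPostCrit (f : RSphere → RSphere) (x : RSphere) : Prop :=
  ∃ b : ℕ → RSphere, b 0 = x ∧ (∀ n, f (b (n + 1)) = b n) ∧
    juliaSet f ⊆ closure (Set.range b) ∧ ∀ n, b n ∉ critSet f

/-- `f` is exceptional: there is a finite nonempty set `Σ_f` with `f⁻¹(Σ_f) \ Crit = Σ_f`. -/
def IsExceptional (f : RSphere → RSphere) : Prop :=
  ∃ S : Set RSphere, S.Finite ∧ S.Nonempty ∧ f ⁻¹' S \ critSet f = S

/-- The largest exceptional set `Σ` of `f`. -/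
def maxExceptional (f : RSphere → RSphere) : Set RSphere :=
  ⋃₀ {S : Set RSphere | S.Finite ∧ S.Nonempty ∧ f ⁻¹' S \ critSet f = S}

/-- `0` not being exceptional, or having exceptional set away from the Julia set. -/
def GoodExc (f : RSphere → RSphere) : Prop :=
  ¬ IsExceptional f ∨ maxExceptional f ∩ juliaSet f = ∅

/-- A parabolic periodic point at a finite point `z`: a periodic point whose multiplier
is a root of unity. -/
def IsParabolicFix (g : RSphere → RSphere) (z : ℂ) : Prop :=
  ∃ m : ℕ, 0 < m ∧ g^[m] (RSphere.ofC z) = RSphere.ofC z ∧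
    ∃ lam : ℂ, (∃ k : ℕ, 0 < k ∧ lam ^ k = 1) ∧
      HasDerivAt (fun w => RSphere.toC (g^[m] (RSphere.ofC w))) lam z

/-- A parabolic periodic point of `f` (at a finite point, or at `∞` read in the chart `1/z`). -/
def IsParabolic (f : RSphere → RSphere) (x : RSphere) : Prop :=
  (∃ z : ℂ, x = RSphere.ofC z ∧ IsParabolicFix f z) ∨
  (x = RSphere.infty ∧ IsParabolicFix (fun y => RSphere.inv (f (RSphere.inv y))) 0)

/-- A recurrent point. -/
def IsRecurrentPt (f : RSphere → RSphere) (x : RSphere) : Prop :=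
  ∃ n : ℕ → ℕ, StrictMono n ∧ Tendsto (fun i => f^[n i] x) atTop (𝓝 x)

/-! ### Graph directed systems and expanding Cantor repellers -/

/-- A graph directed system (GDS) satisfying the strong separation condition with
respect to the map `g`. -/
structure GDS (g : RSphere → RSphere) where
  /-- number of vertices -/
  n : ℕ
  npos : 0 < n
  /-- the open domains -/
  U : Fin n → Set RSphere
  /-- the admissible edges -/
  edge : Fin n → Fin n → Prop
  /-- the inverse branches -/
  br : Fin n → Fin n → RSphere → RSphere
  isOpen : ∀ k, IsOpen (U k)
  isConnected : ∀ k, IsConnected (U k)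
  disjClosure : ∀ k l, k ≠ l → closure (U k) ∩ closure (U l) = ∅
  mapsTo : ∀ k l, edge k l → Set.MapsTo (br k l) (closure (U l)) (U k)
  isBranch : ∀ k l, edge k l → ∀ x ∈ closure (U l), g (br k l x) = x
  bddDistortion : ∃ C : ℝ, ∀ k l, edge k l → distortionOn (br k l) (closure (U l)) ≤ C

/-- The cylinder sets of depth `m` of a GDS. -/
def gdsCyl {g : RSphere → RSphere} (G : GDS g) : ℕ → Set RSphere
  | 0 => ⋃ k, G.U k
  | m + 1 => ⋃ (k : Fin G.n) (l : Fin G.n) (_ : G.edge k l),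
      G.br k l '' (gdsCyl G m ∩ G.U l)

/-- The limit set of a GDS. -/
def gdsLimit {g : RSphere → RSphere} (G : GDS g) : Set RSphere := ⋂ m, gdsCyl G m

/-- An expanding Cantor repeller (ECR) for `g`: a uniformly expanding repeller which is
the limit set of a GDS satisfying the strong separation condition, with `g(Λ) = Λ`. -/
def IsECR (g : RSphere → RSphere) (Λ : Set RSphere) : Prop :=
  ExpandingOn g Λ ∧ IsRepeller g Λ ∧ ∃ G : GDS g, gdsLimit G = Λ

/-- A Cantor set: compact, perfect and totally disconnected. -/
def IsCantorSet (s : Set RSphere) : Prop :=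
  IsCompact s ∧ Perfect s ∧ IsTotallyDisconnected s

/-! ### Entropy, equilibrium states and dimensions -/

/-- The entropy of a countable partition (given by the fibers of `p`). -/
def partEntropy {ι : Type} [Countable ι] (μ : Measure RSphere) (p : RSphere → ι) : ℝ :=
  ∑' i : ι, Real.negMulLog (μ (p ⁻¹' {i})).toReal

/-- Measure-theoretic (Kolmogorov–Sinai) entropy of `T` with respect to `μ`:
supremum over finite measurable partitions of the exponential growth rate of the
entropies of the dynamical refinements. -/
def entropyOf (T : RSphere → RSphere) (μ : Measure RSphere) : ℝ :=
  ⨆ p : {p : RSphere → ℕ // Measurable p ∧ (Set.range p).Finite},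
    ⨅ n : {n : ℕ // 0 < n},
      partEntropy μ (fun x => fun k : Fin n.1 => p.1 (T^[(k : ℕ)] x)) / (n.1 : ℝ)

/-- An equilibrium state for the potential `φ` with respect to `g` restricted to `Λ`. -/
def IsEquilibrium (g : RSphere → RSphere) (Λ : Set RSphere) (φ : RSphere → ℝ)
    (μ : Measure RSphere) : Prop :=
  IsProbabilityMeasure μ ∧ μ Λᶜ = 0 ∧ MeasurePreserving g μ μ ∧
    entropyOf g μ + ∫ x, φ x ∂μ = pressureOn g Λ φ

/-- The Hausdorff dimension of a measure: the infimum of the Hausdorff dimensions of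
sets of full measure. -/
def dimHMeasure (μ : Measure RSphere) : ℝ≥0∞ :=
  ⨅ (s : Set RSphere) (_ : μ sᶜ = 0), dimH s

/-- The minimal number of `ε`-balls needed to cover `s`. -/
def coverNum (s : Set RSphere) (ε : ℝ) : ℕ :=
  sInf {n : ℕ | ∃ t : Finset RSphere, t.card = n ∧ s ⊆ ⋃ x ∈ t, ball x ε}

/-- The upper box-counting dimension. -/
def upperBoxDim (s : Set RSphere) : ℝ :=
  limsup (fun n : ℕ => Real.log (coverNum s (1 / n)) / Real.log n) atTop

/-- The packing dimension, via countable covers and upper box dimensions. -/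
def dimP (s : Set RSphere) : ℝ≥0∞ :=
  ⨅ c : {c : ℕ → Set RSphere // s ⊆ ⋃ n, c n},
    ⨆ n : ℕ, ENNReal.ofReal (upperBoxDim (c.1 n))

/-- The connected component of `y` in `g⁻¹(B)`: the pull-back of `B` along the inverse
branch of `g` sending (the image of) `y` to `y`. -/
def invBranchSet (g : RSphere → RSphere) (B : Set RSphere) (y : RSphere) : Set RSphere :=
  connectedComponentIn (g ⁻¹' B) y

end

namespace RSphere

/-! ### Geometry of the chordal metric -/

lemma dist_eq_dist_embed (x y : RSphere) : dist x y = dist (embed x) (embed y) := rfl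

lemma isometry_embed : Isometry embed := Isometry.of_dist_eq fun _ _ => rfl

lemma dist_sq_eq (x y : RSphere) : dist x y ^ 2 =
    dist (embed x).fst (embed y).fst ^ 2 + dist (embed x).snd (embed y).snd ^ 2 := by
  rw [dist_eq_dist_embed, WithLp.prod_dist_eq_of_L2, Real.sq_sqrt (by positivity)]

lemma embed_ofC_fst (z : ℂ) : (embed (ofC z)).fst = ((2 / (‖z‖ ^ 2 + 1) : ℝ)) • z := rfl

lemma embed_ofC_snd (z : ℂ) : (embed (ofC z)).snd = (‖z‖ ^ 2 - 1) / (‖z‖ ^ 2 + 1) := rfl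

lemma embed_infty_fst : (embed infty).fst = 0 := rfl

lemma embed_infty_snd : (embed infty).snd = 1 := rfl

lemma exists_ofC_or_eq_infty (x : RSphere) : (∃ z, x = ofC z) ∨ x = infty := by
  rcases x with ⟨_ | z⟩
  · exact Or.inr rfl
  · exact Or.inl ⟨z, rfl⟩

lemma ofC_ne_infty (z : ℂ) : ofC z ≠ infty := by
  intro h
  have := congrArg RSphere.val h
  simp [ofC, infty] at this

lemma toC_ofC (z : ℂ) : toC (ofC z) = z := rfl

lemma ofC_toC {x : RSphere} (hx : x ≠ infty) : ofC (toC x) = x := by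
  rcases exists_ofC_or_eq_infty x with ⟨z, rfl⟩ | h
  · rfl
  · exact absurd h hx

lemma inv_infty : inv infty = ofC 0 := rfl

lemma inv_ofC_zero : inv (ofC 0) = infty := by simp [inv, ofC, elim]

lemma inv_ofC {z : ℂ} (hz : z ≠ 0) : inv (ofC z) = ofC z⁻¹ := by
  simp [inv, ofC, elim, hz]

lemma inv_inv (x : RSphere) : inv (inv x) = x := by
  rcases exists_ofC_or_eq_infty x with ⟨z, rfl⟩ | rfl
  · by_cases hz : z = 0
    · subst hz
      rw [inv_ofC_zero, inv_infty]
    · rw [inv_ofC hz, inv_ofC (inv_ne_zero hz), _root_.inv_inv]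
  · rw [inv_infty, inv_ofC_zero]

lemma norm_embed (x : RSphere) : ‖embed x‖ = 1 := by
  have h : ‖embed x‖ ^ 2 = 1 := by
    rw [WithLp.prod_norm_sq_eq_of_L2]
    rcases exists_ofC_or_eq_infty x with ⟨z, rfl⟩ | rfl
    · rw [embed_ofC_fst, embed_ofC_snd, norm_smul, Real.norm_eq_abs, Real.norm_eq_abs,
        mul_pow, sq_abs, sq_abs]
      field_simp
      ring
    · simp [embed_infty_fst, embed_infty_snd]
  nlinarith [norm_nonneg (embed x)]

lemma embed_unembed {v : WithLp 2 (ℂ × ℝ)} (hv : ‖v‖ = 1) : embed (unembed v) = v := by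
  have h : ‖v.fst‖ ^ 2 + v.snd ^ 2 = 1 := by
    have := WithLp.prod_norm_sq_eq_of_L2 v
    rw [hv, Real.norm_eq_abs v.snd, sq_abs] at this
    linarith
  have key : ∀ w : WithLp 2 (ℂ × ℝ), w.fst = v.fst → w.snd = v.snd → w = v := by
    exact fun w h1 h2 => WithLp.ofLp_injective 2 (Prod.ext h1 h2)
  by_cases h1 : v.snd = 1
  · have h0 : v.fst = 0 := by
      rw [h1] at h
      have : ‖v.fst‖ ^ 2 = 0 := by linarith
      simpa using this
    have : unembed v = infty := if_pos h1
    rw [this]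
    exact key _ (by rw [h0, embed_infty_fst]) (by rw [h1, embed_infty_snd])
  · have hu : unembed v = ofC ((1 - v.snd)⁻¹ • v.fst) := if_neg h1
    have hs : 1 - v.snd ≠ 0 := fun hs => h1 (by linarith)
    have hn : ‖(1 - v.snd)⁻¹ • v.fst‖ ^ 2 = (1 + v.snd) / (1 - v.snd) := by
      rw [norm_smul, mul_pow, Real.norm_eq_abs, sq_abs, inv_pow,
        show ‖v.fst‖ ^ 2 = (1 - v.snd) * (1 + v.snd) by linarith]
      field_simp
    have hd : (1 + v.snd) / (1 - v.snd) + 1 = 2 / (1 - v.snd) := by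
      field_simp
      ring
    rw [hu]
    apply key
    · rw [embed_ofC_fst, hn, hd, smul_smul]
      rw [show 2 / (2 / (1 - v.snd)) * (1 - v.snd)⁻¹ = 1 by field_simp, one_smul]
    · rw [embed_ofC_snd, hn, hd]
      field_simp
      ring

lemma range_embed : range embed = sphere 0 1 := by
  ext v
  rw [mem_sphere_zero_iff_norm]
  constructor
  · rintro ⟨x, rfl⟩
    exact norm_embed x
  · intro hv
    exact ⟨unembed v, embed_unembed hv⟩

instance : CompactSpace RSphere := by
  refine ⟨?_⟩
  rw [isometry_embed.isEmbedding.isCompact_iff, image_univ, range_embed]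
  exact isCompact_sphere _ _

lemma isPreconnected_ball (x : RSphere) {δ : ℝ} (hδ : δ ≤ 1) : IsPreconnected (ball x δ) := by
  rcases le_or_gt δ 0 with h0 | h0
  · rw [ball_eq_empty.2 h0]
    exact isPreconnected_empty
  rw [← isometry_embed.isEmbedding.isInducing.isPreconnected_image]
  set y := embed x with hy
  have hyn : ‖y‖ = 1 := norm_embed x
  set c : ℝ := 1 - δ ^ 2 / 2 with hc
  have hc0 : 0 ≤ c := by
    have : δ ^ 2 ≤ 1 := by nlinarith
    linarith
  set K : Set (WithLp 2 (ℂ × ℝ)) := {w | c * ‖w‖ < inner ℝ w y} with hK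
  have hne : ∀ w ∈ K, w ≠ 0 := by
    rintro w hw rfl
    simp [hK] at hw
  have hconv : Convex ℝ K := by
    intro w hw w' hw' a b ha hb hab
    simp only [hK, mem_ofPred_eq] at hw hw' ⊢
    have h1 : ‖a • w + b • w'‖ ≤ a * ‖w‖ + b * ‖w'‖ := by
      refine (norm_add_le _ _).trans_eq ?_
      rw [norm_smul, norm_smul, Real.norm_of_nonneg ha, Real.norm_of_nonneg hb]
    rw [inner_add_left, real_inner_smul_left, real_inner_smul_left]
    have h2 := mul_le_mul_of_nonneg_left h1 hc0
    rcases ha.eq_or_lt with rfl | ha'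
    · have : b = 1 := by linarith
      subst this
      simpa only [zero_smul, one_smul, zero_add, zero_mul, one_mul] using hw'
    · nlinarith [mul_lt_mul_of_pos_left hw ha', mul_le_mul_of_nonneg_left hw'.le hb]
  have himg : embed '' ball x δ = (fun w => ‖w‖⁻¹ • w) '' K := by
    have hcap : ∀ v : WithLp 2 (ℂ × ℝ), ‖v‖ = 1 → (dist v y < δ ↔ c < inner ℝ v y) := by
      intro v hv
      have h1 : dist v y ^ 2 = 2 - 2 * inner ℝ v y := by
        rw [dist_eq_norm, norm_sub_sq_real, hv, hyn]
        ring
      have h2 : dist v y < δ ↔ dist v y ^ 2 < δ ^ 2 :=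
        (pow_lt_pow_iff_left₀ dist_nonneg h0.le two_ne_zero).symm
      rw [h2, h1]
      constructor <;> intro h <;> linarith
    ext v
    constructor
    · rintro ⟨u, hu, rfl⟩
      have h1 : dist (embed u) y < δ := hu
      refine ⟨embed u, ?_, ?_⟩
      · simpa [hK, norm_embed] using (hcap _ (norm_embed u)).1 h1
      · simp [norm_embed]
    · rintro ⟨w, hw, rfl⟩
      have hw0 : 0 < ‖w‖ := norm_pos_iff.2 (hne w hw)
      have hn : ‖‖w‖⁻¹ • w‖ = 1 := by
        rw [norm_smul, norm_inv, norm_norm, inv_mul_cancel₀ hw0.ne']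
      refine ⟨unembed (‖w‖⁻¹ • w), ?_, embed_unembed hn⟩
      change dist (embed _) (embed x) < δ
      rw [embed_unembed hn, hcap _ hn, real_inner_smul_left]
      have hw' : c * ‖w‖ < inner ℝ w y := hw
      rw [inv_mul_eq_div, lt_div_iff₀ hw0]
      exact hw'
  rw [himg]
  refine hconv.isPreconnected.image _ ?_
  exact ContinuousOn.smul (continuousOn_id.norm.inv₀ fun w hw => norm_ne_zero_iff.2 (hne w hw))
    continuousOn_id

lemma dist_ofC_ofC (z w : ℂ) : dist (ofC z) (ofC w) =
    2 * dist z w / (√(1 + ‖z‖ ^ 2) * √(1 + ‖w‖ ^ 2)) := by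
  have h : dist (ofC z) (ofC w) ^ 2 =
      (2 * dist z w / (√(1 + ‖z‖ ^ 2) * √(1 + ‖w‖ ^ 2))) ^ 2 := by
    rw [dist_sq_eq, embed_ofC_fst, embed_ofC_snd, embed_ofC_fst, embed_ofC_snd, div_pow, mul_pow,
      mul_pow, Real.sq_sqrt (by positivity), Real.sq_sqrt (by positivity), Complex.dist_eq,
      Complex.dist_eq, Real.dist_eq, sq_abs]
    have hz : 0 < 1 + (z.re * z.re + z.im * z.im) := by
      nlinarith [mul_self_nonneg z.re, mul_self_nonneg z.im]
    have hw : 0 < 1 + (w.re * w.re + w.im * w.im) := by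
      nlinarith [mul_self_nonneg w.re, mul_self_nonneg w.im]
    simp only [← Complex.normSq_eq_norm_sq, Complex.normSq_apply, Complex.sub_re, Complex.sub_im,
      Complex.real_smul, Complex.mul_re, Complex.mul_im, Complex.ofReal_re, Complex.ofReal_im,
      zero_mul, sub_zero, add_zero]
    rw [add_comm _ (1 : ℝ), add_comm _ (1 : ℝ)]
    field_simp
    ring
  exact (pow_left_inj₀ dist_nonneg (by positivity) two_ne_zero).1 h

lemma isometry_inv : Isometry inv := by
  have key : ∀ x, (embed (inv x)).fst = (starRingEnd ℂ) (embed x).fst ∧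
      (embed (inv x)).snd = -(embed x).snd := by
    intro x
    rcases exists_ofC_or_eq_infty x with ⟨z, rfl⟩ | rfl
    · by_cases hz : z = 0
      · subst hz
        rw [inv_ofC_zero, embed_infty_fst, embed_infty_snd, embed_ofC_fst, embed_ofC_snd]
        simp
      · have hn : 0 < ‖z‖ := norm_pos_iff.2 hz
        rw [inv_ofC hz, embed_ofC_fst, embed_ofC_snd, embed_ofC_fst, embed_ofC_snd]
        constructor
        · rw [Complex.inv_def, Complex.real_smul, Complex.real_smul, map_mul, Complex.conj_ofReal,
            mul_comm ((starRingEnd ℂ) z), ← mul_assoc, ← Complex.ofReal_mul,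
            Complex.normSq_eq_norm_sq, norm_mul, Complex.norm_real, RCLike.norm_conj]
          congr 2
          rw [Real.norm_eq_abs, abs_of_pos (by positivity)]
          field_simp
          ring
        · rw [norm_inv]
          field_simp
          ring
    · rw [inv_infty, embed_infty_fst, embed_infty_snd, embed_ofC_fst, embed_ofC_snd]
      simp
  refine Isometry.of_dist_eq fun x y => ?_
  have h : dist (inv x) (inv y) ^ 2 = dist x y ^ 2 := by
    rw [dist_sq_eq, dist_sq_eq, (key x).1, (key x).2, (key y).1, (key y).2, dist_neg_neg,
      Complex.dist_conj_conj]
  exact (pow_left_inj₀ dist_nonneg dist_nonneg two_ne_zero).1 h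

lemma dist_ofC_ofC_le (z w : ℂ) : dist (ofC z) (ofC w) ≤ 2 * dist z w := by
  rw [dist_ofC_ofC]
  refine div_le_self (by positivity) ?_
  have h1 : 1 ≤ √(1 + ‖w‖ ^ 2) := Real.one_le_sqrt.2 (by nlinarith [norm_nonneg w])
  have h2 : 1 ≤ √(1 + ‖z‖ ^ 2) := Real.one_le_sqrt.2 (by nlinarith [norm_nonneg z])
  nlinarith

lemma continuous_ofC : Continuous ofC :=
  (LipschitzWith.of_dist_le_mul (K := 2) dist_ofC_ofC_le).continuous

lemma continuousAt_toC (z : ℂ) : ContinuousAt toC (ofC z) := by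
  have h : toC = (fun v : WithLp 2 (ℂ × ℝ) => (1 - v.snd)⁻¹ • v.fst) ∘ embed := by
    funext x
    rcases exists_ofC_or_eq_infty x with ⟨w, rfl⟩ | rfl
    · rw [toC_ofC]
      simp only [Function.comp, embed_ofC_fst, embed_ofC_snd, smul_smul]
      have : (1 - (‖w‖ ^ 2 - 1) / (‖w‖ ^ 2 + 1))⁻¹ * (2 / (‖w‖ ^ 2 + 1)) = 1 := by
        have h1 : 1 - (‖w‖ ^ 2 - 1) / (‖w‖ ^ 2 + 1) = 2 / (‖w‖ ^ 2 + 1) := by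
          field_simp
          ring
        rw [h1, inv_mul_cancel₀ (by positivity)]
      rw [this, one_smul]
    · change (0 : ℂ) = _ • (embed infty).fst
      rw [embed_infty_fst, smul_zero]
  rw [h]
  refine ContinuousAt.comp ?_ isometry_embed.continuous.continuousAt
  have hz : 1 - (embed (ofC z)).snd ≠ 0 := by
    rw [embed_ofC_snd, sub_ne_zero]
    intro h
    rw [eq_comm, div_eq_one_iff_eq (by positivity)] at h
    linarith
  have h1 : Continuous fun v : WithLp 2 (ℂ × ℝ) => v.snd := WithLp.continuous_snd ..
  have h2 : Continuous fun v : WithLp 2 (ℂ × ℝ) => v.fst := WithLp.continuous_fst ..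
  exact ((continuous_const.sub h1).continuousAt.inv₀ hz).smul h2.continuousAt

lemma eventually_ne_infty (z : ℂ) : ∀ᶠ x in 𝓝 (ofC z), x ≠ infty :=
  isOpen_ne.mem_nhds (ofC_ne_infty z)

lemma neBot_nhdsNE (x : RSphere) : (𝓝[≠] x).NeBot := by
  have main : ∀ z : ℂ, (𝓝[≠] (ofC z)).NeBot := by
    intro z
    have : Tendsto ofC (𝓝[≠] z) (𝓝[≠] (ofC z)) := by
      refine tendsto_nhdsWithin_iff.2 ⟨continuous_ofC.continuousAt.mono_left nhdsWithin_le_nhds, ?_⟩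
      filter_upwards [self_mem_nhdsWithin] with w hw h
      exact hw (congrArg toC h)
    exact this.neBot
  rcases exists_ofC_or_eq_infty x with ⟨z, rfl⟩ | rfl
  · exact main z
  · have h := main 0
    have : Tendsto inv (𝓝[≠] (ofC 0)) (𝓝[≠] infty) := by
      rw [← inv_ofC_zero]
      refine tendsto_nhdsWithin_iff.2
        ⟨isometry_inv.continuous.continuousAt.mono_left nhdsWithin_le_nhds, ?_⟩
      filter_upwards [self_mem_nhdsWithin] with w hw h
      exact hw (isometry_inv.injective h)
    exact this.neBot

end RSphere

/-! ### Maps that are locally similarities up to a factor `exp (O(dist))` -/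

section ConformalNear

variable {X Y Z : Type*} [MetricSpace X] [MetricSpace Y] [MetricSpace Z]

/-- Near `x` the map `g` is open and distorts distances by a positive factor `E`, up to a
multiplicative error `exp (± C * dist)`. -/
def ConformalNear (g : X → Y) (x : X) : Prop :=
  ∃ U ∈ 𝓝 x, ∃ C : ℝ, 0 ≤ C ∧ ∃ E : X → ℝ,
    (∀ u ∈ U, 0 < E u ∧ 𝓝 (g u) ≤ map g (𝓝 u)) ∧
    ∀ u ∈ U, ∀ v ∈ U, Real.exp (-(C * dist u v)) * E u * dist u v ≤ dist (g u) (g v) ∧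
      dist (g u) (g v) ≤ Real.exp (C * dist u v) * E u * dist u v

lemma ConformalNear.exists_bounds {g : X → Y} {x : X} (hg : ConformalNear g x) :
    ∃ U ∈ 𝓝 x, ∃ C : ℝ, 0 ≤ C ∧ ∃ E : X → ℝ, ∃ m : ℝ, 0 < m ∧ ∃ M : ℝ, 0 < M ∧
      (∀ u ∈ U, 0 < E u ∧ 𝓝 (g u) ≤ map g (𝓝 u)) ∧
      ∀ u ∈ U, ∀ v ∈ U, Real.exp (-(C * dist u v)) * E u * dist u v ≤ dist (g u) (g v) ∧
        dist (g u) (g v) ≤ Real.exp (C * dist u v) * E u * dist u v ∧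
        m * dist u v ≤ dist (g u) (g v) ∧ dist (g u) (g v) ≤ M * dist u v := by
  obtain ⟨U, hU, C, hC, E, hE, hd⟩ := hg
  have hx : x ∈ U := mem_of_mem_nhds hU
  have hEx := (hE x hx).1
  have hbd : ∀ u ∈ U ∩ ball x 1,
      Real.exp (-(2 * C)) * E x ≤ E u ∧ E u ≤ Real.exp (2 * C) * E x := by
    rintro u ⟨hu, hu1⟩
    have hEu := (hE u hu).1
    have h2C : (1 : ℝ) ≤ Real.exp (2 * C) := Real.one_le_exp (by positivity)
    rcases eq_or_ne u x with rfl | hne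
    · exact ⟨mul_le_of_le_one_left hEu.le (Real.exp_le_one_iff.2 (by linarith)),
        le_mul_of_one_le_left hEu.le h2C⟩
    have hpos : 0 < dist u x := dist_pos.2 hne
    have hlt : dist u x < 1 := hu1
    obtain ⟨h1, h2⟩ := hd u hu x hx
    obtain ⟨h3, h4⟩ := hd x hx u hu
    rw [dist_comm x u, dist_comm (g x) (g u)] at h3 h4
    have h5 := le_of_mul_le_mul_right (h1.trans h4) hpos
    have h6 := le_of_mul_le_mul_right (h3.trans h2) hpos
    have hCd : C * dist u x ≤ C := mul_le_of_le_one_right hC hlt.le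
    constructor
    · have h7 : Real.exp (-(2 * C)) * E x ≤
          Real.exp (-(C * dist u x)) * (Real.exp (-(C * dist u x)) * E x) := by
        rw [← mul_assoc, ← Real.exp_add]
        gcongr
        linarith
      refine h7.trans ((mul_le_mul_of_nonneg_left h6 (Real.exp_pos _).le).trans_eq ?_)
      rw [← mul_assoc, ← Real.exp_add]
      simp
    · have h7 : Real.exp (C * dist u x) * (Real.exp (C * dist u x) * E x) ≤
          Real.exp (2 * C) * E x := by
        rw [← mul_assoc, ← Real.exp_add]
        gcongr
        linarith
      refine (Eq.le ?_).trans ((mul_le_mul_of_nonneg_left h5 (Real.exp_pos _).le).trans h7)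
      rw [← mul_assoc, ← Real.exp_add]
      simp
  refine ⟨U ∩ ball x 1, inter_mem hU (ball_mem_nhds x one_pos), C, hC, E,
    Real.exp (-(4 * C)) * E x, by positivity, Real.exp (4 * C) * E x, by positivity,
    fun u hu => hE u hu.1, fun u hu v hv => ?_⟩
  obtain ⟨h1, h2⟩ := hd u hu.1 v hv.1
  obtain ⟨h3, h4⟩ := hbd u hu
  have hEu := (hE u hu.1).1
  have hlt : dist u v ≤ 2 := by
    have h5 : dist u x < 1 := hu.2
    have h6 : dist v x < 1 := hv.2
    linarith [dist_triangle_right u v x]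
  have hCd : C * dist u v ≤ 2 * C := by nlinarith
  refine ⟨h1, h2, le_trans ?_ h1, h2.trans ?_⟩
  · refine mul_le_mul_of_nonneg_right ?_ dist_nonneg
    calc Real.exp (-(4 * C)) * E x = Real.exp (-(2 * C)) * (Real.exp (-(2 * C)) * E x) := by
          rw [← mul_assoc, ← Real.exp_add]
          ring_nf
      _ ≤ Real.exp (-(C * dist u v)) * E u := by gcongr
  · refine mul_le_mul_of_nonneg_right ?_ dist_nonneg
    calc Real.exp (C * dist u v) * E u ≤ Real.exp (2 * C) * (Real.exp (2 * C) * E x) := by gcongr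
      _ = Real.exp (4 * C) * E x := by
          rw [← mul_assoc, ← Real.exp_add]
          ring_nf

lemma ConformalNear.continuousAt {g : X → Y} {x : X} (hg : ConformalNear g x) :
    ContinuousAt g x := by
  obtain ⟨U, hU, C, hC, E, m, hm, M, hM, hE, hd⟩ := hg.exists_bounds
  rw [ContinuousAt, tendsto_iff_dist_tendsto_zero]
  refine squeeze_zero' (Eventually.of_forall fun _ => dist_nonneg)
    (g := fun u => M * dist u x) ?_ ?_
  · filter_upwards [hU] with u hu
    exact (hd u hu x (mem_of_mem_nhds hU)).2.2.2
  · have : Tendsto (fun u => M * dist u x) (𝓝 x) (𝓝 (M * dist x x)) :=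
      (continuous_const.mul (continuous_id.dist continuous_const)).tendsto x
    simpa using this

lemma ConformalNear.congr {g g' : X → Y} {x : X} (hg : ConformalNear g x)
    (h : g' =ᶠ[𝓝 x] g) : ConformalNear g' x := by
  obtain ⟨U, hU, C, hC, E, hE, hd⟩ := hg
  refine ⟨U ∩ {u | g' =ᶠ[𝓝 u] g}, inter_mem hU (eventually_eventually_nhds.2 h), C, hC, E, ?_, ?_⟩
  · rintro u ⟨hu, hu'⟩
    have hu'' : g' =ᶠ[𝓝 u] g := hu'
    refine ⟨(hE u hu).1, ?_⟩
    rw [map_congr hu'', hu''.eq_of_nhds]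
    exact (hE u hu).2
  · rintro u ⟨hu, hu'⟩ v ⟨hv, hv'⟩
    have hu'' : g' =ᶠ[𝓝 u] g := hu'
    have hv'' : g' =ᶠ[𝓝 v] g := hv'
    rw [hu''.eq_of_nhds, hv''.eq_of_nhds]
    exact hd u hu v hv

lemma ConformalNear.comp {g : X → Y} {h : Y → Z} {x : X} (hh : ConformalNear h (g x))
    (hg : ConformalNear g x) : ConformalNear (h ∘ g) x := by
  have hcont := hg.continuousAt
  obtain ⟨U, hU, C, hC, E, m, hm, M, hM, hE, hd⟩ := hg.exists_bounds
  obtain ⟨U', hU', C', hC', E', hE', hd'⟩ := hh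
  refine ⟨U ∩ g ⁻¹' U', inter_mem hU (hcont hU'), C' * M + C, by positivity,
    fun u => E' (g u) * E u, ?_, ?_⟩
  · rintro u ⟨hu, hu'⟩
    refine ⟨mul_pos (hE' _ hu').1 (hE u hu).1, ?_⟩
    rw [← Filter.map_map]
    exact (hE' _ hu').2.trans (map_mono (hE u hu).2)
  · rintro u ⟨hu, hu'⟩ v ⟨hv, hv'⟩
    obtain ⟨h1, h2, -, h4⟩ := hd u hu v hv
    obtain ⟨k1, k2⟩ := hd' _ hu' _ hv'
    have hEu := (hE u hu).1
    have hEu' := (hE' _ hu').1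
    have hexp : C' * dist (g u) (g v) ≤ C' * M * dist u v := by
      rw [mul_assoc]
      gcongr
    constructor
    · refine le_trans ?_ k1
      calc Real.exp (-((C' * M + C) * dist u v)) * (E' (g u) * E u) * dist u v
          = Real.exp (-(C' * M * dist u v)) * E' (g u) *
              (Real.exp (-(C * dist u v)) * E u * dist u v) := by
            rw [add_mul, neg_add, Real.exp_add]
            ring
        _ ≤ Real.exp (-(C' * dist (g u) (g v))) * E' (g u) * dist (g u) (g v) := by
            gcongr
    · refine k2.trans ?_
      calc Real.exp (C' * dist (g u) (g v)) * E' (g u) * dist (g u) (g v)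
          ≤ Real.exp (C' * M * dist u v) * E' (g u) *
              (Real.exp (C * dist u v) * E u * dist u v) := by gcongr
        _ = Real.exp ((C' * M + C) * dist u v) * (E' (g u) * E u) * dist u v := by
            rw [add_mul, Real.exp_add]
            ring

lemma ConformalNear.leftInverse {g : X → Y} {h : Y → X} {x : X} (hg : ConformalNear g x)
    (hgc : Continuous g) (hhg : Function.LeftInverse h g) (hgh : ∀ᶠ y in 𝓝 (g x), g (h y) = y)
    (hh : ContinuousAt h (g x)) : ConformalNear h (g x) := by
  obtain ⟨U, hU, C, hC, E, m, hm, M, hM, hE, hd⟩ := hg.exists_bounds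
  have hU' : h ⁻¹' U ∈ 𝓝 (g x) := hh (by rwa [hhg x])
  refine ⟨{y | g (h y) = y} ∩ h ⁻¹' U, inter_mem hgh hU', C / m, by positivity,
    fun y => (E (h y))⁻¹, ?_, ?_⟩
  · rintro y ⟨hy, hyU⟩
    have hy' : g (h y) = y := hy
    refine ⟨inv_pos.2 (hE _ hyU).1, ?_⟩
    calc 𝓝 (h y) = map h (map g (𝓝 (h y))) := by
          rw [Filter.map_map, hhg.comp_eq_id, map_id]
      _ ≤ map h (𝓝 (g (h y))) := map_mono hgc.continuousAt
      _ = map h (𝓝 y) := by rw [hy']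
  · rintro y ⟨hy, hyU⟩ y' ⟨hy', hyU'⟩
    have e1 : g (h y) = y := hy
    have e2 : g (h y') = y' := hy'
    obtain ⟨h1, h2, h3, -⟩ := hd _ hyU _ hyU'
    rw [e1, e2] at h1 h2 h3
    have hEy := (hE _ hyU).1
    have hle : C * dist (h y) (h y') ≤ C / m * dist y y' := by
      rw [div_mul_eq_mul_div, le_div_iff₀ hm, mul_assoc]
      gcongr
      linarith
    constructor
    · rw [← div_eq_mul_inv, div_mul_eq_mul_div, div_le_iff₀ hEy]
      calc Real.exp (-(C / m * dist y y')) * dist y y'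
          ≤ Real.exp (-(C * dist (h y) (h y'))) *
              (Real.exp (C * dist (h y) (h y')) * E (h y) * dist (h y) (h y')) := by gcongr
        _ = dist (h y) (h y') * E (h y) := by
            rw [← mul_assoc, ← mul_assoc, ← Real.exp_add, neg_add_cancel, Real.exp_zero]
            ring
    · rw [← div_eq_mul_inv, div_mul_eq_mul_div, le_div_iff₀ hEy]
      calc dist (h y) (h y') * E (h y)
          = Real.exp (C * dist (h y) (h y')) *
              (Real.exp (-(C * dist (h y) (h y'))) * E (h y) * dist (h y) (h y')) := by
            rw [← mul_assoc, ← mul_assoc, ← Real.exp_add, add_neg_cancel, Real.exp_zero]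
            ring
        _ ≤ Real.exp (C / m * dist y y') * dist y y' := by gcongr

lemma conformalNear_of_abs_sub_le {g : X → Y} {x : X} {E : X → ℝ} {U : Set X} {L : ℝ}
    (hE : ContinuousAt E x) (hEx : 0 < E x) (hL : 0 ≤ L) (hU : U ∈ 𝓝 x)
    (ho : ∀ u ∈ U, 𝓝 (g u) ≤ map g (𝓝 u))
    (hd : ∀ u ∈ U, ∀ v ∈ U, |dist (g u) (g v) - E u * dist u v| ≤ L * dist u v ^ 2) :
    ConformalNear g x := by
  set m := E x / 2 with hm
  have hm0 : 0 < m := by positivity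
  set ρ := m / (4 * (L + 1)) with hρ
  have hρ0 : 0 < ρ := by positivity
  have hEm : ∀ᶠ u in 𝓝 x, m < E u := hE.eventually (lt_mem_nhds (by linarith))
  refine ⟨U ∩ {u | m < E u} ∩ ball x ρ,
    inter_mem (inter_mem hU hEm) (ball_mem_nhds x hρ0), 2 * (L / m), by positivity, E, ?_, ?_⟩
  · rintro u ⟨⟨hu, hu'⟩, -⟩
    have hu'' : m < E u := hu'
    exact ⟨hm0.trans hu'', ho u hu⟩
  · rintro u ⟨⟨hu, hu'⟩, hu1⟩ v ⟨⟨hv, -⟩, hv1⟩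
    have hEu : m < E u := hu'
    have h1 : dist u v ≤ 2 * ρ := by
      have h5 : dist u x < ρ := hu1
      have h6 : dist v x < ρ := hv1
      linarith [dist_triangle_right u v x]
    obtain ⟨h2, h3⟩ := abs_le.1 (hd u hu v hv)
    set d := dist u v with hd'
    have hd0 : 0 ≤ d := dist_nonneg
    set t := L / m * d with ht
    have ht0 : 0 ≤ t := by positivity
    have ht1 : t ≤ 1 / 2 := by
      have : L / m * d ≤ L / m * (2 * ρ) := by gcongr
      refine this.trans ?_
      rw [hρ, show L / m * (2 * (m / (4 * (L + 1)))) = L / (2 * (L + 1)) by field_simp; ring]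
      rw [div_le_div_iff₀ (by positivity) two_pos]
      linarith
    have hkey : L * d ^ 2 ≤ t * (E u * d) := by
      have : L * d ^ 2 = t * (m * d) := by
        rw [ht]
        field_simp
      rw [this]
      gcongr
    have hEd : 0 ≤ E u * d := mul_nonneg (hm0.trans hEu).le hd0
    rw [show 2 * (L / m) * d = 2 * t by rw [ht]; ring, mul_assoc, mul_assoc]
    constructor
    · have he : Real.exp (-(2 * t)) ≤ 1 - t := by
        rw [Real.exp_neg, inv_le_comm₀ (Real.exp_pos _) (by linarith)]
        refine le_trans ?_ (Real.add_one_le_exp (2 * t))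
        rw [inv_le_iff_one_le_mul₀ (by linarith)]
        nlinarith
      nlinarith [mul_le_mul_of_nonneg_right he hEd]
    · have he : 1 + t ≤ Real.exp (2 * t) := by
        linarith [Real.add_one_le_exp (2 * t)]
      nlinarith [mul_le_mul_of_nonneg_right he hEd]

lemma Isometry.conformalNear {g : X → X} (hg : Isometry g) (hgg : Function.Involutive g) (x : X) :
    ConformalNear g x := by
  refine conformalNear_of_abs_sub_le (E := fun _ => 1) (U := univ) (L := 0) continuousAt_const
    one_pos le_rfl univ_mem (fun u _ => ?_) fun u _ v _ => by simp [hg.dist_eq]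
  exact ((hgg.toPerm g).toHomeomorphOfIsInducing hg.isEmbedding.isInducing).map_nhds_eq u |>.ge

end ConformalNear

lemma AnalyticAt.conformalNear {F : ℂ → ℂ} {z₀ : ℂ} (hF : AnalyticAt ℂ F z₀)
    (h0 : deriv F z₀ ≠ 0) : ConformalNear F z₀ := by
  have hF' : AnalyticAt ℂ (deriv F) z₀ := hF.deriv
  obtain ⟨L, s, hs, hLs⟩ := (hF'.contDiffAt (n := 1)).exists_lipschitzOnWith
  have hev : ∀ᶠ z in 𝓝 z₀, AnalyticAt ℂ F z ∧ deriv F z ≠ 0 ∧ z ∈ s :=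
    hF.eventually_analyticAt.and ((hF'.continuousAt.eventually_ne h0).and hs)
  obtain ⟨ρ, hρ, hball⟩ := Metric.eventually_nhds_iff_ball.1 hev
  refine conformalNear_of_abs_sub_le (E := fun z => ‖deriv F z‖) (U := ball z₀ ρ) (L := L)
    hF'.continuousAt.norm (norm_pos_iff.2 h0) L.2 (ball_mem_nhds _ hρ) (fun u hu => ?_)
    fun u hu v hv => ?_
  · obtain ⟨h1, h2, -⟩ := hball u hu
    exact (h1.hasStrictDerivAt.map_nhds_eq h2).ge
  · have hseg : segment ℝ u v ⊆ ball z₀ ρ := (convex_ball z₀ ρ).segment_subset hu hv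
    have hmv : ‖(F v - deriv F u * v) - (F u - deriv F u * u)‖ ≤ (L * dist u v) * ‖v - u‖ := by
      refine Convex.norm_image_sub_le_of_norm_hasDerivWithin_le (𝕜 := ℂ)
        (f := fun z => F z - deriv F u * z)
        (f' := fun z => deriv F z - deriv F u) (s := segment ℝ u v) ?_ ?_ (convex_segment u v)
        (left_mem_segment ℝ u v) (right_mem_segment ℝ u v)
      · intro z hz
        have h1 := ((hball z (hseg hz)).1.differentiableAt.hasDerivAt).sub
          ((hasDerivAt_id z).const_mul (deriv F u))
        rw [mul_one] at h1
        exact h1.hasDerivWithinAt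
      · intro z hz
        have h1 := hLs.dist_le_mul z (hball z (hseg hz)).2.2 u (hball u hu).2.2
        rw [dist_eq_norm] at h1
        refine h1.trans ?_
        gcongr
        exact segment_subset_closedBall_left u v hz
    have h2 : |‖F v - F u‖ - ‖deriv F u * (v - u)‖| ≤
        ‖(F v - F u) - deriv F u * (v - u)‖ := abs_norm_sub_norm_le _ _
    rw [norm_mul] at h2
    rw [dist_comm (F u), dist_comm u v, dist_eq_norm, dist_eq_norm]
    refine h2.trans ?_
    rw [dist_comm u v, dist_eq_norm] at hmv
    calc _ = ‖(F v - deriv F u * v) - (F u - deriv F u * u)‖ := by ring_nf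
      _ ≤ _ := hmv
      _ = _ := by ring

namespace RSphere

lemma lipschitz_sqrt_one_add_sq (z w : ℂ) : |√(1 + ‖z‖ ^ 2) - √(1 + ‖w‖ ^ 2)| ≤ dist z w := by
  have key : ∀ a b : ℂ, √(1 + ‖a‖ ^ 2) - √(1 + ‖b‖ ^ 2) ≤ dist a b := by
    intro a b
    have h1 : ‖a‖ ≤ ‖b‖ + dist a b := by
      rw [dist_eq_norm]
      linarith [norm_sub_norm_le a b]
    have h2 : ‖b‖ ≤ √(1 + ‖b‖ ^ 2) := Real.le_sqrt_of_sq_le (by linarith)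
    have h3 : √(1 + ‖b‖ ^ 2) ^ 2 = 1 + ‖b‖ ^ 2 := Real.sq_sqrt (by positivity)
    have h4 : (0 : ℝ) ≤ dist a b := dist_nonneg
    rw [sub_le_iff_le_add']
    refine Real.sqrt_le_iff.2 ⟨by positivity, ?_⟩
    nlinarith [norm_nonneg a, norm_nonneg b, mul_le_mul_of_nonneg_right h2 h4,
      mul_self_le_mul_self (norm_nonneg a) h1]
  refine abs_le.2 ⟨?_, key z w⟩
  have := key w z
  rw [dist_comm] at this
  linarith

lemma map_ofC_nhds (z : ℂ) : 𝓝 (ofC z) ≤ map ofC (𝓝 z) := by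
  have h : (ofC ∘ toC) =ᶠ[𝓝 (ofC z)] id := by
    filter_upwards [eventually_ne_infty z] with x hx using ofC_toC hx
  calc 𝓝 (ofC z) = map ofC (map toC (𝓝 (ofC z))) := by
        rw [Filter.map_map, map_congr h, map_id]
    _ ≤ map ofC (𝓝 z) := map_mono (continuousAt_toC z)

lemma conformalNear_ofC (z₀ : ℂ) : ConformalNear ofC z₀ := by
  have hA : ∀ z : ℂ, 1 ≤ √(1 + ‖z‖ ^ 2) := fun z =>
    Real.one_le_sqrt.2 (by nlinarith [norm_nonneg z])
  refine conformalNear_of_abs_sub_le (E := fun z => 2 / √(1 + ‖z‖ ^ 2) ^ 2) (U := univ) (L := 2)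
    ?_ ?_ zero_le_two univ_mem (fun u _ => map_ofC_nhds u) fun u _ v _ => ?_
  · refine ContinuousAt.div continuousAt_const (by fun_prop) ?_
    have := hA z₀
    positivity
  · have := hA z₀
    positivity
  · rw [dist_ofC_ofC]
    have h1 := lipschitz_sqrt_one_add_sq u v
    have hu := hA u
    have hv := hA v
    set A := √(1 + ‖u‖ ^ 2)
    set B := √(1 + ‖v‖ ^ 2)
    have hd : 0 ≤ dist u v := dist_nonneg
    have : 2 * dist u v / (A * B) - 2 / A ^ 2 * dist u v = 2 * dist u v * (A - B) / (A ^ 2 * B) := by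
      field_simp
    rw [this, abs_div, abs_mul, abs_of_nonneg (by positivity : 0 ≤ 2 * dist u v),
      abs_of_pos (by positivity : 0 < A ^ 2 * B)]
    have hAB : 1 ≤ A ^ 2 * B := by nlinarith
    calc 2 * dist u v * |A - B| / (A ^ 2 * B) ≤ 2 * dist u v * |A - B| :=
          div_le_self (by positivity) hAB
      _ ≤ 2 * dist u v * dist u v := by gcongr
      _ = 2 * dist u v ^ 2 := by ring

lemma conformalNear_toC (z : ℂ) : ConformalNear toC (ofC z) :=
  (conformalNear_ofC z).leftInverse continuous_ofC toC_ofC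
    (by filter_upwards [eventually_ne_infty z] with x hx using ofC_toC hx) (continuousAt_toC z)

end RSphere

/-! ### Local structure of rational maps -/

/-- A continuous self-map of the sphere given by a quotient of nonzero polynomials wherever
both are nonzero. -/
def IsPolyQuotient (g : RSphere → RSphere) : Prop :=
  Continuous g ∧ ∃ P Q : Polynomial ℂ, P ≠ 0 ∧ Q ≠ 0 ∧
    ∀ z, P.eval z ≠ 0 → Q.eval z ≠ 0 → g (RSphere.ofC z) = RSphere.ofC (P.eval z / Q.eval z)

lemma IsRationalMap.isPolyQuotient {f : RSphere → RSphere} {p q : Polynomial ℂ}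
    (hf : IsRationalMap f p q) (hdeg : 2 ≤ ratDeg p q) : IsPolyQuotient f := by
  refine ⟨hf.continuous, p, q, ?_, ?_, fun z _ hz => hf.eval z hz⟩
  · rintro rfl
    have := Polynomial.natDegree_eq_zero_of_isUnit (isCoprime_zero_left.1 hf.coprime)
    simp [ratDeg, this] at hdeg
  · rintro rfl
    have := Polynomial.natDegree_eq_zero_of_isUnit (isCoprime_zero_right.1 hf.coprime)
    simp [ratDeg, this] at hdeg

lemma IsPolyQuotient.inv_comp {g : RSphere → RSphere} (hg : IsPolyQuotient g) :
    IsPolyQuotient (RSphere.inv ∘ g) := by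
  obtain ⟨hc, P, Q, hP, hQ, h⟩ := hg
  refine ⟨RSphere.isometry_inv.continuous.comp hc, Q, P, hQ, hP, fun z hz1 hz2 => ?_⟩
  rw [Function.comp, h z hz2 hz1, RSphere.inv_ofC (div_ne_zero hz2 hz1), inv_div]

lemma Polynomial.eval_inv_eq_eval_reverse_div {K : Type*} [Field K] (P : Polynomial K) {z : K}
    (hz : z ≠ 0) : P.eval z⁻¹ = P.reverse.eval z / z ^ P.natDegree := by
  let _ : Invertible z⁻¹ := invertibleOfNonzero (inv_ne_zero hz)
  have h := Polynomial.eval₂_reverse_mul_pow (RingHom.id K) z⁻¹ P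
  rw [invOf_eq_inv, inv_inv] at h
  change P.reverse.eval z * z⁻¹ ^ P.natDegree = P.eval z⁻¹ at h
  rw [← h, inv_pow, div_eq_mul_inv]

lemma IsPolyQuotient.comp_inv {g : RSphere → RSphere} (hg : IsPolyQuotient g) :
    IsPolyQuotient (g ∘ RSphere.inv) := by
  obtain ⟨hc, P, Q, hP, hQ, h⟩ := hg
  refine ⟨hc.comp RSphere.isometry_inv.continuous,
    Polynomial.X ^ (Q.natDegree + 1) * P.reverse, Polynomial.X ^ (P.natDegree + 1) * Q.reverse,
    mul_ne_zero (pow_ne_zero _ Polynomial.X_ne_zero) (by simpa using hP),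
    mul_ne_zero (pow_ne_zero _ Polynomial.X_ne_zero) (by simpa using hQ), fun z hz1 hz2 => ?_⟩
  simp only [Polynomial.eval_mul, Polynomial.eval_pow, Polynomial.eval_X] at hz1 hz2 ⊢
  have hz : z ≠ 0 := by
    rintro rfl
    simp at hz1
  have h1 := right_ne_zero_of_mul hz1
  have h2 := right_ne_zero_of_mul hz2
  have e1 := P.eval_inv_eq_eval_reverse_div hz
  have e2 := Q.eval_inv_eq_eval_reverse_div hz
  rw [Function.comp, RSphere.inv_ofC hz, h, e1, e2]
  · congr 1
    field_simp
    ring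
  · rw [e1]
    exact div_ne_zero h1 (pow_ne_zero _ hz)
  · rw [e2]
    exact div_ne_zero h2 (pow_ne_zero _ hz)

lemma IsPolyQuotient.analyticAt {g : RSphere → RSphere} (hg : IsPolyQuotient g) {z₀ : ℂ}
    (h : g (RSphere.ofC z₀) ≠ RSphere.infty) :
    AnalyticAt ℂ (fun z => RSphere.toC (g (RSphere.ofC z))) z₀ := by
  obtain ⟨hc, P, Q, hP, hQ, hPQ⟩ := hg
  apply Complex.analyticAt_of_differentiable_on_punctured_nhds_of_continuousAt
  · set S : Set ℂ := {z | (P * Q).IsRoot z}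
    have hS : S.Finite := Polynomial.finite_setOfPred_isRoot (mul_ne_zero hP hQ)
    have hev : ∀ᶠ z in 𝓝[≠] z₀, z ∈ Sᶜ := by
      have h1 : (S \ {z₀})ᶜ ∈ 𝓝 z₀ := hS.sdiff.isClosed.isOpen_compl.mem_nhds (by simp)
      filter_upwards [nhdsWithin_le_nhds h1, self_mem_nhdsWithin] with z hz1 hz2 hz3
      exact hz1 ⟨hz3, hz2⟩
    filter_upwards [hev] with z hz
    have hne : ∀ w ∈ Sᶜ, P.eval w ≠ 0 ∧ Q.eval w ≠ 0 := by
      intro w hw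
      have : ¬ (P * Q).eval w = 0 := hw
      rw [Polynomial.eval_mul] at this
      exact ⟨left_ne_zero_of_mul this, right_ne_zero_of_mul this⟩
    have hloc : (fun w => RSphere.toC (g (RSphere.ofC w))) =ᶠ[𝓝 z]
        fun w => P.eval w / Q.eval w := by
      filter_upwards [hS.isClosed.isOpen_compl.mem_nhds hz] with w hw
      rw [hPQ w (hne w hw).1 (hne w hw).2, RSphere.toC_ofC]
    exact ((P.differentiableAt).div Q.differentiableAt (hne z hz).2).congr_of_eventuallyEq hloc
  · refine ContinuousAt.comp (g := RSphere.toC) ?_ (hc.comp RSphere.continuous_ofC).continuousAt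
    rw [← RSphere.ofC_toC h]
    exact RSphere.continuousAt_toC _

lemma IsPolyQuotient.conformalNear_or_tendsto_ofC_of_ne_infty {g : RSphere → RSphere}
    (hg : IsPolyQuotient g) {z₀ : ℂ} (h : g (RSphere.ofC z₀) ≠ RSphere.infty) :
    ConformalNear g (RSphere.ofC z₀) ∨
      Tendsto (fun y => dist (g y) (g (RSphere.ofC z₀)) / dist y (RSphere.ofC z₀))
        (𝓝[≠] (RSphere.ofC z₀)) (𝓝 0) := by
  have hF := hg.analyticAt h
  set F : ℂ → ℂ := fun z => RSphere.toC (g (RSphere.ofC z)) with hFdef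
  have hfin : ∀ᶠ y in 𝓝 (RSphere.ofC z₀), y ≠ RSphere.infty ∧ g y ≠ RSphere.infty :=
    (RSphere.eventually_ne_infty z₀).and
      (hg.1.continuousAt.eventually (isOpen_ne.mem_nhds h))
  have hrep : ∀ y, y ≠ RSphere.infty → g y ≠ RSphere.infty →
      g y = RSphere.ofC (F (RSphere.toC y)) := by
    intro y hy hgy
    rw [hFdef]
    simp only
    rw [RSphere.ofC_toC hy, RSphere.ofC_toC hgy]
  by_cases h0 : deriv F z₀ = 0
  · right
    obtain ⟨U, hU, C, -, E, m, -, M, hM, -, hd⟩ := (RSphere.conformalNear_toC z₀).exists_bounds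
    have hder : HasDerivAt F 0 z₀ := h0 ▸ hF.differentiableAt.hasDerivAt
    rw [Metric.tendsto_nhds]
    intro ε hε
    have hlo := (hasDerivAt_iff_isLittleO.1 hder).def (c := ε / (4 * M)) (by positivity)
    have hlo' := (RSphere.continuousAt_toC z₀).eventually hlo
    filter_upwards [nhdsWithin_le_nhds hfin, nhdsWithin_le_nhds hU, nhdsWithin_le_nhds hlo',
      self_mem_nhdsWithin] with y hy hyU hylo hne
    have hpos : 0 < dist y (RSphere.ofC z₀) := dist_pos.2 hne
    rw [dist_zero_right, Real.norm_of_nonneg (by positivity), div_lt_iff₀ hpos,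
      hrep y hy.1 hy.2, hrep _ (RSphere.ofC_ne_infty z₀) h, RSphere.toC_ofC]
    refine (RSphere.dist_ofC_ofC_le _ _).trans_lt ?_
    have h1 := (hd y hyU _ (mem_of_mem_nhds hU)).2.2.2
    rw [smul_zero, sub_zero, ← dist_eq_norm, ← dist_eq_norm] at hylo
    rw [RSphere.toC_ofC] at h1
    calc 2 * dist (F (RSphere.toC y)) (F z₀) ≤
        2 * (ε / (4 * M) * (M * dist y (RSphere.ofC z₀))) := by
          gcongr
          exact hylo.trans (by gcongr)
      _ = ε / 2 * dist y (RSphere.ofC z₀) := by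
          field_simp
          ring
      _ < ε * dist y (RSphere.ofC z₀) := by
          gcongr
          linarith
  · left
    have h1 : ConformalNear (F ∘ RSphere.toC) (RSphere.ofC z₀) :=
      ConformalNear.comp (hF.conformalNear h0) (RSphere.conformalNear_toC z₀)
    have h2 : ConformalNear (RSphere.ofC ∘ F ∘ RSphere.toC) (RSphere.ofC z₀) :=
      ConformalNear.comp (RSphere.conformalNear_ofC _) h1
    refine h2.congr ?_
    filter_upwards [hfin] with y hy using hrep y hy.1 hy.2

lemma RSphere.conformalNear_inv (x : RSphere) : ConformalNear RSphere.inv x :=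
  RSphere.isometry_inv.conformalNear RSphere.inv_inv x

lemma IsPolyQuotient.conformalNear_or_tendsto_ofC {g : RSphere → RSphere}
    (hg : IsPolyQuotient g) (z₀ : ℂ) : ConformalNear g (RSphere.ofC z₀) ∨
      Tendsto (fun y => dist (g y) (g (RSphere.ofC z₀)) / dist y (RSphere.ofC z₀))
        (𝓝[≠] (RSphere.ofC z₀)) (𝓝 0) := by
  by_cases h : g (RSphere.ofC z₀) = RSphere.infty
  · have h' : (RSphere.inv ∘ g) (RSphere.ofC z₀) ≠ RSphere.infty := by
      rw [Function.comp, h, RSphere.inv_infty]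
      exact RSphere.ofC_ne_infty 0
    rcases hg.inv_comp.conformalNear_or_tendsto_ofC_of_ne_infty h' with h1 | h1
    · left
      have h2 := ConformalNear.comp (RSphere.conformalNear_inv _) h1
      rwa [← Function.comp_assoc,
        show RSphere.inv ∘ RSphere.inv = id from funext RSphere.inv_inv, Function.id_comp] at h2
    · right
      simpa only [Function.comp, RSphere.isometry_inv.dist_eq] using h1
  · exact hg.conformalNear_or_tendsto_ofC_of_ne_infty h

lemma IsPolyQuotient.conformalNear_or_tendsto {g : RSphere → RSphere}
    (hg : IsPolyQuotient g) (x : RSphere) : ConformalNear g x ∨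
      Tendsto (fun y => dist (g y) (g x) / dist y x) (𝓝[≠] x) (𝓝 0) := by
  rcases RSphere.exists_ofC_or_eq_infty x with ⟨z, rfl⟩ | rfl
  · exact hg.conformalNear_or_tendsto_ofC z
  · rcases hg.comp_inv.conformalNear_or_tendsto_ofC 0 with h1 | h1
    · left
      have h2 := ConformalNear.comp (g := RSphere.inv) (x := RSphere.infty) h1
        (RSphere.conformalNear_inv _)
      rwa [Function.comp_assoc,
        show RSphere.inv ∘ RSphere.inv = id from funext RSphere.inv_inv, Function.comp_id] at h2
    · right
      have h2 : Tendsto RSphere.inv (𝓝[≠] RSphere.infty) (𝓝[≠] (RSphere.ofC 0)) := by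
        rw [← RSphere.inv_infty]
        refine tendsto_nhdsWithin_iff.2
          ⟨RSphere.isometry_inv.continuous.continuousAt.mono_left nhdsWithin_le_nhds, ?_⟩
        filter_upwards [self_mem_nhdsWithin] with w hw h
        exact hw (RSphere.isometry_inv.injective h)
      refine (h1.comp h2).congr fun y => ?_
      rw [← RSphere.inv_infty, Function.comp, RSphere.isometry_inv.dist_eq]
      simp only [Function.comp, RSphere.inv_inv]

lemma conformalNear_of_notMem_critSet {f : RSphere → RSphere} (hf : IsPolyQuotient f)
    {x : RSphere} (hx : x ∉ critSet f) : ConformalNear f x := by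
  rcases hf.conformalNear_or_tendsto x with h | h
  · exact h
  · have := RSphere.neBot_nhdsNE x
    exact absurd h.limsup_eq hx

/-! ### Uniform estimates near a compact set without critical points -/

/-- `f` is conformal on the `r`-neighbourhood of `J`: there it is open, its spherical derivative is
positive, and it distorts distances by this derivative up to a factor `exp (± C * dist)`. -/
structure ConformalAround (f : RSphere → RSphere) (J : Set RSphere) (r C : ℝ) : Prop where
  r_pos : 0 < r
  C_nonneg : 0 ≤ C
  deriv_pos : ∀ x ∈ J, ∀ u ∈ ball x r, 0 < sphDeriv f u
  nhds_le : ∀ x ∈ J, ∀ u ∈ ball x r, 𝓝 (f u) ≤ map f (𝓝 u)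
  tendsto : ∀ x ∈ J, ∀ u ∈ ball x r,
    Tendsto (fun y => dist (f y) (f u) / dist y u) (𝓝[≠] u) (𝓝 (sphDeriv f u))
  le_dist : ∀ x ∈ J, ∀ u ∈ ball x r, ∀ v ∈ ball x r,
    Real.exp (-(C * dist u v)) * sphDeriv f u * dist u v ≤ dist (f u) (f v)
  dist_le : ∀ x ∈ J, ∀ u ∈ ball x r, ∀ v ∈ ball x r,
    dist (f u) (f v) ≤ Real.exp (C * dist u v) * sphDeriv f u * dist u v

lemma ConformalAround.mono {f : RSphere → RSphere} {J J' : Set RSphere} {r r' C C' : ℝ}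
    (h : ConformalAround f J r C) (hJ : J' ⊆ J) (hr : r' ≤ r) (hr' : 0 < r') (hC : C ≤ C') :
    ConformalAround f J' r' C' where
  r_pos := hr'
  C_nonneg := h.C_nonneg.trans hC
  deriv_pos x hx u hu := h.deriv_pos x (hJ hx) u (ball_subset_ball hr hu)
  nhds_le x hx u hu := h.nhds_le x (hJ hx) u (ball_subset_ball hr hu)
  tendsto x hx u hu := h.tendsto x (hJ hx) u (ball_subset_ball hr hu)
  le_dist x hx u hu v hv := by
    have hu' := ball_subset_ball hr hu
    have hpos := h.deriv_pos x (hJ hx) u hu'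
    refine le_trans ?_ (h.le_dist x (hJ hx) u hu' v (ball_subset_ball hr hv))
    gcongr
  dist_le x hx u hu v hv := by
    have hu' := ball_subset_ball hr hu
    have hpos := h.deriv_pos x (hJ hx) u hu'
    refine (h.dist_le x (hJ hx) u hu' v (ball_subset_ball hr hv)).trans ?_
    gcongr

lemma ConformalAround.union {f : RSphere → RSphere} {J J' : Set RSphere} {r C : ℝ}
    (h : ConformalAround f J r C) (h' : ConformalAround f J' r C) :
    ConformalAround f (J ∪ J') r C where
  r_pos := h.r_pos
  C_nonneg := h.C_nonneg
  deriv_pos x hx := hx.elim (h.deriv_pos x) (h'.deriv_pos x)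
  nhds_le x hx := hx.elim (h.nhds_le x) (h'.nhds_le x)
  tendsto x hx := hx.elim (h.tendsto x) (h'.tendsto x)
  le_dist x hx := hx.elim (h.le_dist x) (h'.le_dist x)
  dist_le x hx := hx.elim (h.dist_le x) (h'.dist_le x)

lemma ConformalNear.exists_conformalAround {f : RSphere → RSphere} {x : RSphere}
    (h : ConformalNear f x) : ∃ t ∈ 𝓝 x, ∃ r C, ConformalAround f t r C := by
  obtain ⟨U, hU, C, hC, E, hE, hd⟩ := h
  obtain ⟨ρ, hρ, hball⟩ := Metric.mem_nhds_iff.1 hU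
  have hlim : ∀ u ∈ ball x ρ,
      Tendsto (fun y => dist (f y) (f u) / dist y u) (𝓝[≠] u) (𝓝 (E u)) := by
    intro u hu
    have hdist : Tendsto (fun y => C * dist u y) (𝓝[≠] u) (𝓝 0) := by
      have : Tendsto (fun y => C * dist u y) (𝓝 u) (𝓝 (C * dist u u)) :=
        (continuous_const.mul (continuous_const.dist continuous_id)).tendsto u
      rw [dist_self, mul_zero] at this
      exact this.mono_left nhdsWithin_le_nhds
    have h1 : Tendsto (fun y => Real.exp (-(C * dist u y)) * E u) (𝓝[≠] u) (𝓝 (E u)) := by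
      simpa using (hdist.neg.rexp).mul_const (E u)
    have h2 : Tendsto (fun y => Real.exp (C * dist u y) * E u) (𝓝[≠] u) (𝓝 (E u)) := by
      simpa using (hdist.rexp).mul_const (E u)
    have hev : ∀ᶠ y in 𝓝[≠] u, y ∈ ball x ρ ∧ 0 < dist y u := by
      filter_upwards [nhdsWithin_le_nhds (isOpen_ball.mem_nhds hu), self_mem_nhdsWithin]
        with y hy hne using ⟨hy, dist_pos.2 hne⟩
    refine tendsto_of_tendsto_of_tendsto_of_le_of_le' h1 h2 ?_ ?_
    · filter_upwards [hev] with y hy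
      rw [le_div_iff₀ hy.2, dist_comm (f y), dist_comm y u]
      exact (hd u (hball hu) y (hball hy.1)).1
    · filter_upwards [hev] with y hy
      rw [div_le_iff₀ hy.2, dist_comm (f y), dist_comm y u]
      exact (hd u (hball hu) y (hball hy.1)).2
  have hEeq : ∀ u ∈ ball x ρ, sphDeriv f u = E u := by
    intro u hu
    have := RSphere.neBot_nhdsNE u
    exact (hlim u hu).limsup_eq
  have hsub : ∀ y ∈ ball x (ρ / 2), ball y (ρ / 2) ⊆ ball x ρ := by
    intro y hy
    refine ball_subset_ball' ?_
    have : dist y x < ρ / 2 := hy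
    linarith
  refine ⟨ball x (ρ / 2), ball_mem_nhds x (half_pos hρ), ρ / 2, C, half_pos hρ, hC, ?_, ?_, ?_,
    ?_, ?_⟩ <;> intro y hy u hu
  · rw [hEeq u (hsub y hy hu)]
    exact (hE u (hball (hsub y hy hu))).1
  · exact (hE u (hball (hsub y hy hu))).2
  · rw [hEeq u (hsub y hy hu)]
    exact hlim u (hsub y hy hu)
  · intro v hv
    rw [hEeq u (hsub y hy hu)]
    exact (hd u (hball (hsub y hy hu)) v (hball (hsub y hy hv))).1
  · intro v hv
    rw [hEeq u (hsub y hy hu)]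
    exact (hd u (hball (hsub y hy hu)) v (hball (hsub y hy hv))).2

lemma IsCompact.exists_conformalAround {f : RSphere → RSphere} {J : Set RSphere}
    (hJ : IsCompact J) (h : ∀ x ∈ J, ConformalNear f x) : ∃ r C, ConformalAround f J r C := by
  refine hJ.induction_on (p := fun s => ∃ r C, ConformalAround f s r C) ?_ ?_ ?_ ?_
  · exact ⟨1, 0, one_pos, le_rfl, by simp, by simp, by simp, by simp, by simp⟩
  · rintro s t hst ⟨r, C, ht⟩
    exact ⟨r, C, ht.mono hst le_rfl ht.r_pos le_rfl⟩
  · rintro s t ⟨r, C, hs⟩ ⟨r', C', ht⟩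
    have hr := lt_min hs.r_pos ht.r_pos
    exact ⟨min r r', max C C',
      (hs.mono subset_rfl (min_le_left _ _) hr (le_max_left _ _)).union
        (ht.mono subset_rfl (min_le_right _ _) hr (le_max_right _ _))⟩
  · intro x hx
    obtain ⟨t, ht, r, C, hc⟩ := (h x hx).exists_conformalAround
    exact ⟨t, nhdsWithin_le_nhds ht, r, C, hc⟩

/-- The logarithm of the spherical derivative. -/
noncomputable def logSphDeriv (f : RSphere → RSphere) (x : RSphere) : ℝ := Real.log (sphDeriv f x)

section Orbits

variable {f : RSphere → RSphere} {J : Set RSphere} {r C : ℝ}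

lemma ConformalAround.exp_logSphDeriv (h : ConformalAround f J r C) {x u : RSphere} (hx : x ∈ J)
    (hu : u ∈ ball x r) : Real.exp (logSphDeriv f u) = sphDeriv f u :=
  Real.exp_log (h.deriv_pos x hx u hu)

lemma ConformalAround.logSphDeriv_sub_le (h : ConformalAround f J r C) {x u v : RSphere} (hx : x ∈ J)
    (hu : u ∈ ball x r) (hv : v ∈ ball x r) :
    logSphDeriv f u - logSphDeriv f v ≤ 2 * C * dist u v := by
  rcases eq_or_ne u v with rfl | hne
  · simp
  have hpos : 0 < dist u v := dist_pos.2 hne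
  have h1 := h.le_dist x hx u hu v hv
  have h2 := h.dist_le x hx v hv u hu
  rw [dist_comm v u, dist_comm (f v)] at h2
  have h3 := le_of_mul_le_mul_right (h1.trans h2) hpos
  rw [← h.exp_logSphDeriv hx hu, ← h.exp_logSphDeriv hx hv, ← Real.exp_add, ← Real.exp_add,
    Real.exp_le_exp] at h3
  linarith

lemma ConformalAround.continuousOn_logSphDeriv (h : ConformalAround f J r C) :
    ContinuousOn (logSphDeriv f) J := by
  intro x hx
  refine ContinuousAt.continuousWithinAt ?_
  rw [ContinuousAt, tendsto_iff_dist_tendsto_zero]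
  refine squeeze_zero' (Eventually.of_forall fun _ => dist_nonneg)
    (g := fun u => 2 * C * dist u x) ?_ ?_
  · filter_upwards [ball_mem_nhds x h.r_pos] with u hu
    have hxx := mem_ball_self h.r_pos (x := x)
    rw [Real.dist_eq, abs_le]
    have h1 := h.logSphDeriv_sub_le hx hu hxx
    have h2 := h.logSphDeriv_sub_le hx hxx hu
    rw [dist_comm] at h2
    constructor <;> linarith
  · have : Tendsto (fun u => 2 * C * dist u x) (𝓝 x) (𝓝 (2 * C * dist x x)) :=
      (continuous_const.mul (continuous_id.dist continuous_const)).tendsto x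
    simpa using this

lemma birkhoff_zero (g : RSphere → RSphere) (φ : RSphere → ℝ) (x : RSphere) :
    birkhoff g φ 0 x = 0 := by simp [birkhoff]

lemma birkhoff_succ (g : RSphere → RSphere) (φ : RSphere → ℝ) (n : ℕ) (x : RSphere) :
    birkhoff g φ (n + 1) x = birkhoff g φ n x + φ (g^[n] x) := by
  simp [birkhoff, Finset.sum_range_succ]

lemma birkhoff_add (g : RSphere → RSphere) (φ : RSphere → ℝ) (m n : ℕ) (x : RSphere) :
    birkhoff g φ (m + n) x = birkhoff g φ m x + birkhoff g φ n (g^[m] x) := by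
  simp only [birkhoff, Finset.sum_range_add]
  congr 1
  refine Finset.sum_congr rfl fun k _ => ?_
  rw [add_comm m k, Function.iterate_add_apply]

lemma ConformalAround.sphDeriv_iterate (h : ConformalAround f J r C) (hf : Continuous f)
    {n : ℕ} {u : RSphere} (hu : ∀ k < n, ∃ x ∈ J, f^[k] u ∈ ball x r) :
    sphDeriv (f^[n]) u = Real.exp (birkhoff f (logSphDeriv f) n u) := by
  suffices H : Tendsto (fun y => dist (f^[n] y) (f^[n] u) / dist y u) (𝓝[≠] u)
      (𝓝 (Real.exp (birkhoff f (logSphDeriv f) n u))) by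
    have := RSphere.neBot_nhdsNE u
    exact H.limsup_eq
  induction n with
  | zero =>
    rw [birkhoff_zero, Real.exp_zero]
    refine tendsto_const_nhds.congr' ?_
    filter_upwards [self_mem_nhdsWithin] with y hy
    exact (div_self (dist_pos.2 hy).ne').symm
  | succ n ih =>
    have ih' := ih fun k hk => hu k (by omega)
    obtain ⟨x, hx, hux⟩ := hu n (by omega)
    have hpos : ∀ᶠ y in 𝓝[≠] u, 0 < dist (f^[n] y) (f^[n] u) / dist y u :=
      ih'.eventually (lt_mem_nhds (Real.exp_pos _))
    have hne : ∀ᶠ y in 𝓝[≠] u, f^[n] y ≠ f^[n] u := by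
      filter_upwards [hpos] with y hy h0
      simp [h0] at hy
    have ht : Tendsto (f^[n]) (𝓝[≠] u) (𝓝[≠] (f^[n] u)) :=
      tendsto_nhdsWithin_iff.2
        ⟨(hf.iterate n).continuousAt.mono_left nhdsWithin_le_nhds, hne⟩
    have h1 := ((h.tendsto x hx _ hux).comp ht).mul ih'
    rw [birkhoff_succ, Real.exp_add, mul_comm, h.exp_logSphDeriv hx hux]
    refine h1.congr' ?_
    filter_upwards [hne] with y hy
    rw [Function.comp, Function.iterate_succ_apply', Function.iterate_succ_apply']
    have : dist (f^[n] y) (f^[n] u) ≠ 0 := (dist_pos.2 hy).ne'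
    field_simp

lemma ConformalAround.nhds_le_map_iterate (h : ConformalAround f J r C)
    {n : ℕ} {u : RSphere} (hu : ∀ k < n, ∃ x ∈ J, f^[k] u ∈ ball x r) :
    𝓝 (f^[n] u) ≤ map (f^[n]) (𝓝 u) := by
  induction n with
  | zero => simp
  | succ n ih =>
    obtain ⟨x, hx, hux⟩ := hu n (by omega)
    rw [Function.iterate_succ_apply', Function.iterate_succ', ← Filter.map_map]
    exact (h.nhds_le x hx _ hux).trans (map_mono (ih fun k hk => hu k (by omega)))

end Orbits


/-! ### The Julia set and lower bounds for Birkhoff sums -/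

lemma isOpen_fatouSet (f : RSphere → RSphere) : IsOpen (fatouSet f) := by
  refine isOpen_iff_mem_nhds.2 fun x ⟨U, hU, hx, h⟩ => ?_
  filter_upwards [hU.mem_nhds hx] with y hy using ⟨U, hU, hy, h⟩

lemma isCompact_juliaSet (f : RSphere → RSphere) : IsCompact (juliaSet f) :=
  (isOpen_fatouSet f).isClosed_compl.isCompact

lemma mapsTo_juliaSet {f : RSphere → RSphere} (hf : Continuous f) :
    MapsTo f (juliaSet f) (juliaSet f) := by
  rintro x hx ⟨U, hU, hxU, h⟩
  refine hx ⟨f ⁻¹' U, hU.preimage hf, hxU, fun y hy V hV => ?_⟩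
  have h1 : ∀ᶠ z in 𝓝[f ⁻¹' U] y, ∀ n, (f^[n] (f y), f^[n] (f z)) ∈ V :=
    (hf.continuousAt.continuousWithinAt.tendsto_nhdsWithin fun _ hz => hz).eventually
      (h (f y) hy V hV)
  have h2 : ∀ᶠ z in 𝓝[f ⁻¹' U] y, (y, z) ∈ V := nhdsWithin_le_nhds (mem_nhds_left y hV)
  filter_upwards [h1, h2] with z hz1 hz2 n
  cases n with
  | zero => exact hz2
  | succ n => exact hz1 n

section Orbits

variable {f : RSphere → RSphere} {r C : ℝ}

lemma ConformalAround.notMem_juliaSet_of_birkhoff_le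
    (h : ConformalAround f (juliaSet f) r C) (hf : Continuous f) {y : RSphere} {ε : ℝ}
    (hε : 0 < ε) (hy : ∀ j : ℕ, birkhoff f (logSphDeriv f) j y ≤ -ε * j) : y ∉ juliaSet f := by
  intro hyJ
  have hJ : ∀ j, f^[j] y ∈ juliaSet f := fun j => (mapsTo_juliaSet hf).iterate j hyJ
  have hC := h.C_nonneg
  obtain ⟨ρ, hρ, hρr, hρC⟩ : ∃ ρ, 0 < ρ ∧ ρ ≤ r ∧ 4 * C * ρ ≤ ε := by
    have hpos : 0 < min r (ε / (4 * C + 1)) := lt_min h.r_pos (by positivity)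
    refine ⟨min r (ε / (4 * C + 1)), hpos, min_le_left _ _, ?_⟩
    have := (le_div_iff₀ (by positivity)).1 (min_le_right r (ε / (4 * C + 1)))
    linarith
  have hexp : ∀ j : ℕ, birkhoff f (logSphDeriv f) j y + 4 * C * ρ * j ≤ 0 := by
    intro j
    have := hy j
    have : 4 * C * ρ * j ≤ ε * j := by gcongr
    linarith
  have key : ∀ j : ℕ, ∀ u ∈ ball y ρ, ∀ v ∈ ball y ρ, dist (f^[j] u) (f^[j] v) ≤
      Real.exp (birkhoff f (logSphDeriv f) j y + 4 * C * ρ * j) * dist u v := by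
    intro j
    induction j with
    | zero => intro u _ v _; simp [birkhoff_zero]
    | succ j ih =>
      have hmem : ∀ u ∈ ball y ρ, f^[j] u ∈ ball (f^[j] y) ρ := by
        intro u hu
        refine lt_of_le_of_lt (ih u hu y (mem_ball_self hρ)) (lt_of_le_of_lt ?_ hu)
        exact mul_le_of_le_one_left dist_nonneg (Real.exp_le_one_iff.2 (hexp j))
      intro u hu v hv
      have hu' := ball_subset_ball hρr (hmem u hu)
      have hv' := ball_subset_ball hρr (hmem v hv)
      have h1 := h.dist_le _ (hJ j) _ hu' _ hv'
      rw [← h.exp_logSphDeriv (hJ j) hu', ← Real.exp_add] at h1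
      have h2 := h.logSphDeriv_sub_le (hJ j) hu' (mem_ball_self h.r_pos)
      have h3 : dist (f^[j] u) (f^[j] v) ≤ 2 * ρ := by
        have := dist_triangle_right (f^[j] u) (f^[j] v) (f^[j] y)
        have a := hmem u hu
        have b := hmem v hv
        rw [mem_ball] at a b
        linarith
      have h4 : dist (f^[j] u) (f^[j] y) ≤ ρ := (hmem u hu).le
      have h5 : C * dist (f^[j] u) (f^[j] v) ≤ C * (2 * ρ) := by gcongr
      have h6 : 2 * C * dist (f^[j] u) (f^[j] y) ≤ 2 * C * ρ := by gcongr
      rw [Function.iterate_succ_apply', Function.iterate_succ_apply']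
      calc dist (f (f^[j] u)) (f (f^[j] v))
          ≤ Real.exp (logSphDeriv f (f^[j] y) + 4 * C * ρ) * dist (f^[j] u) (f^[j] v) := by
            exact h1.trans (mul_le_mul_of_nonneg_right (Real.exp_le_exp.2 (by linarith)) dist_nonneg)
        _ ≤ Real.exp (logSphDeriv f (f^[j] y) + 4 * C * ρ) *
            (Real.exp (birkhoff f (logSphDeriv f) j y + 4 * C * ρ * j) * dist u v) := by
            gcongr
            exact ih u hu v hv
        _ = _ := by
            rw [← mul_assoc, ← Real.exp_add, birkhoff_succ]
            push_cast
            ring_nf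
  refine hyJ ⟨ball y ρ, isOpen_ball, mem_ball_self hρ, fun u hu V hV => ?_⟩
  obtain ⟨η, hη, hηV⟩ := Metric.mem_uniformity_dist.1 hV
  filter_upwards [self_mem_nhdsWithin, nhdsWithin_le_nhds (ball_mem_nhds u hη)] with v hv hvu j
  refine hηV (lt_of_le_of_lt (key j u hu v hv) (lt_of_le_of_lt
    (mul_le_of_le_one_left dist_nonneg (Real.exp_le_one_iff.2 (hexp j))) ?_))
  rw [dist_comm]
  exact hvu

lemma ConformalAround.exists_abs_logSphDeriv_le (h : ConformalAround f (juliaSet f) r C) :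
    ∃ L, ∀ x ∈ juliaSet f, |logSphDeriv f x| ≤ L :=
  (isCompact_juliaSet f).exists_bound_of_continuousOn h.continuousOn_logSphDeriv

lemma ConformalAround.continuousOn_birkhoff (h : ConformalAround f (juliaSet f) r C)
    (hf : Continuous f) (n : ℕ) :
    ContinuousOn (birkhoff f (logSphDeriv f) n) (juliaSet f) :=
  continuousOn_finsetSum _ fun k _ =>
    h.continuousOn_logSphDeriv.comp (hf.iterate k).continuousOn ((mapsTo_juliaSet hf).iterate k)

lemma ConformalAround.exists_lt_birkhoff (h : ConformalAround f (juliaSet f) r C)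
    (hf : Continuous f) {ε : ℝ} (hε : 0 < ε) :
    ∃ M : ℕ, ∀ x ∈ juliaSet f, ∃ j ≤ M, -ε * j < birkhoff f (logSphDeriv f) j x := by
  by_contra! hcon
  let S : ℕ → Set RSphere := fun j =>
    {x | x ∈ juliaSet f ∧ birkhoff f (logSphDeriv f) j x ≤ -ε * j}
  have hS : ∀ j, IsClosed (S j) := fun j =>
    (h.continuousOn_birkhoff hf j).preimage_isClosed_of_isClosed
      (isCompact_juliaSet f).isClosed isClosed_Iic
  have hcl : ∀ M, IsClosed (⋂ j ≤ M, S j) := fun M =>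
    isClosed_iInter fun j => isClosed_iInter fun _ => hS j
  obtain ⟨y, hy⟩ := IsCompact.nonempty_iInter_of_sequence_nonempty_isCompact_isClosed
    (fun M : ℕ => ⋂ j ≤ M, S j)
    (fun M => biInter_subset_biInter_left fun j (hj : j ≤ M) => hj.trans M.le_succ)
    (fun M => by
      obtain ⟨x, hx, hxM⟩ := hcon M
      exact ⟨x, mem_iInter₂.2 fun j hj => ⟨hx, hxM j hj⟩⟩)
    (hcl 0).isCompact hcl
  have hy' : ∀ j, y ∈ S j := fun j => mem_iInter₂.1 (mem_iInter.1 hy j) j le_rfl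
  exact h.notMem_juliaSet_of_birkhoff_le hf hε (fun j => (hy' j).2) (hy' 0).1

lemma ConformalAround.exists_le_birkhoff (h : ConformalAround f (juliaSet f) r C)
    (hf : Continuous f) {ε : ℝ} (hε : 0 < ε) :
    ∃ A : ℝ, ∀ n : ℕ, ∀ x ∈ juliaSet f, -ε * n - A ≤ birkhoff f (logSphDeriv f) n x := by
  obtain ⟨M, hM⟩ := h.exists_lt_birkhoff hf hε
  obtain ⟨L, hbd⟩ := h.exists_abs_logSphDeriv_le
  refine ⟨M * L, fun n => ?_⟩
  induction n using Nat.strong_induction_on with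
  | _ n ih =>
    intro x hx
    rcases le_or_gt n M with hn | hn
    · have h1 : ∑ _k ∈ Finset.range n, -L ≤ birkhoff f (logSphDeriv f) n x :=
        Finset.sum_le_sum fun k _ =>
          (abs_le.1 (hbd _ ((mapsTo_juliaSet hf).iterate k hx))).1
      simp only [Finset.sum_const, Finset.card_range, nsmul_eq_mul] at h1
      have hL : 0 ≤ L := (abs_nonneg _).trans (hbd x hx)
      have h2 : (n : ℝ) * L ≤ M * L := by gcongr
      have h3 : 0 ≤ ε * n := by positivity
      linarith
    · obtain ⟨j, hj, hlt⟩ := hM x hx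
      have hj0 : j ≠ 0 := by
        rintro rfl
        simp [birkhoff_zero] at hlt
      obtain ⟨m, rfl⟩ := Nat.exists_eq_add_of_le (hj.trans hn.le)
      have := ih m (by omega) _ ((mapsTo_juliaSet hf).iterate j hx)
      rw [birkhoff_add]
      push_cast
      linarith

end Orbits

/-! ### Pull-backs of small balls -/

/-- The points whose first `n` iterates follow those of `x` at distances less than `4 * a k`. -/
def shadow (f : RSphere → RSphere) (x : RSphere) (n : ℕ) (a : ℕ → ℝ) : Set RSphere :=
  {u | ∀ k < n, f^[k] u ∈ ball (f^[k] x) (4 * a k)}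

lemma isOpen_shadow {f : RSphere → RSphere} (hf : Continuous f) (x : RSphere) (n : ℕ)
    (a : ℕ → ℝ) : IsOpen (shadow f x n a) := by
  have : shadow f x n a = ⋂ k ∈ Iio n, f^[k] ⁻¹' ball (f^[k] x) (4 * a k) := by
    ext u
    simp [shadow]
  rw [this]
  exact (finite_Iio n).isOpen_biInter fun k _ => isOpen_ball.preimage (hf.iterate k)

section Orbits

variable {f : RSphere → RSphere} {J : Set RSphere} {r C : ℝ} {x u v : RSphere} {n : ℕ}
  {a : ℕ → ℝ}

lemma ConformalAround.dist_iterate_le_of_mem_shadow (h : ConformalAround f J r C)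
    (hx : ∀ k, f^[k] x ∈ J) (ha0 : ∀ k, 0 ≤ a k) (har : ∀ k < n, 4 * a k ≤ r)
    (hsum : 16 * C * ∑ k ∈ Finset.range n, a k ≤ Real.log 2)
    (hu : u ∈ shadow f x n a) (hv : v ∈ shadow f x n a) {k : ℕ} (hk : k ≤ n) :
    dist (f^[k] u) (f^[k] v) ≤ 2 * Real.exp (birkhoff f (logSphDeriv f) k x -
      birkhoff f (logSphDeriv f) n x) * dist (f^[n] u) (f^[n] v) := by
  have hC := h.C_nonneg
  set S := fun k => birkhoff f (logSphDeriv f) k x with hS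
  set A := fun k => 16 * C * ∑ i ∈ Finset.range k, a i with hA
  suffices H : dist (f^[k] u) (f^[k] v) ≤
      Real.exp (A n - A k + (S k - S n)) * dist (f^[n] u) (f^[n] v) by
    refine H.trans ?_
    rw [Real.exp_add]
    gcongr
    rw [← Real.le_log_iff_exp_le two_pos]
    have : 0 ≤ A k := mul_nonneg (by positivity) (Finset.sum_nonneg fun i _ => ha0 i)
    exact (sub_le_self _ this).trans hsum
  induction hk using Nat.decreasingInduction with
  | self => simp
  | of_succ k hk ih =>
    have hu' := hu k hk
    have hv' := hv k hk
    have hur := ball_subset_ball (har k hk) hu'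
    have hvr := ball_subset_ball (har k hk) hv'
    have h1 := h.le_dist _ (hx k) _ hur _ hvr
    rw [← h.exp_logSphDeriv (hx k) hur, ← Real.exp_add] at h1
    have h2 := h.logSphDeriv_sub_le (hx k) (mem_ball_self h.r_pos) hur
    have h3 : dist (f^[k] u) (f^[k] v) ≤ 8 * a k := by
      have := dist_triangle_right (f^[k] u) (f^[k] v) (f^[k] x)
      rw [mem_ball] at hu' hv'
      linarith
    have h5 : C * dist (f^[k] u) (f^[k] v) ≤ C * (8 * a k) := by gcongr
    have h6 : 2 * C * dist (f^[k] x) (f^[k] u) ≤ 2 * C * (4 * a k) := by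
      rw [dist_comm]
      exact mul_le_mul_of_nonneg_left (mem_ball.1 hu').le (by positivity)
    have h7 : Real.exp (logSphDeriv f (f^[k] x) - 16 * C * a k) * dist (f^[k] u) (f^[k] v) ≤
        dist (f^[k + 1] u) (f^[k + 1] v) := by
      rw [Function.iterate_succ_apply', Function.iterate_succ_apply']
      exact le_trans (mul_le_mul_of_nonneg_right (Real.exp_le_exp.2 (by linarith)) dist_nonneg) h1
    have h8 := h7.trans ih
    have hSk : S (k + 1) = S k + logSphDeriv f (f^[k] x) := birkhoff_succ _ _ _ _
    have hAk : A (k + 1) = A k + 16 * C * a k := by simp [hA, Finset.sum_range_succ, mul_add]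
    have h9 : Real.exp (A n - A (k + 1) + (S (k + 1) - S n)) =
        Real.exp (logSphDeriv f (f^[k] x) - 16 * C * a k) *
          Real.exp (A n - A k + (S k - S n)) := by
      rw [← Real.exp_add, hSk, hAk]
      ring_nf
    rw [h9, mul_assoc (Real.exp (logSphDeriv f (f^[k] x) - 16 * C * a k))] at h8
    exact le_of_mul_le_mul_left h8 (Real.exp_pos _)

lemma ConformalAround.sphDeriv_iterate_of_mem_shadow (h : ConformalAround f J r C)
    (hf : Continuous f) (hx : ∀ k, f^[k] x ∈ J) (har : ∀ k < n, 4 * a k ≤ r)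
    (hu : u ∈ shadow f x n a) :
    sphDeriv (f^[n]) u = Real.exp (birkhoff f (logSphDeriv f) n u) :=
  h.sphDeriv_iterate hf fun k hk => ⟨_, hx k, ball_subset_ball (har k hk) (hu k hk)⟩

lemma ConformalAround.sphDeriv_iterate_div_le_two (h : ConformalAround f J r C)
    (hf : Continuous f) (hx : ∀ k, f^[k] x ∈ J) (har : ∀ k < n, 4 * a k ≤ r)
    (hsum : 16 * C * ∑ k ∈ Finset.range n, a k ≤ Real.log 2)
    (hu : u ∈ shadow f x n a) (hv : v ∈ shadow f x n a) :
    sphDeriv (f^[n]) u / sphDeriv (f^[n]) v ≤ 2 := by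
  have hC := h.C_nonneg
  rw [h.sphDeriv_iterate_of_mem_shadow hf hx har hu, h.sphDeriv_iterate_of_mem_shadow hf hx har hv,
    ← Real.exp_sub, ← Real.le_log_iff_exp_le two_pos]
  refine le_trans ?_ hsum
  rw [birkhoff, birkhoff, ← Finset.sum_sub_distrib, Finset.mul_sum]
  refine Finset.sum_le_sum fun k hk => ?_
  have hk := Finset.mem_range.1 hk
  have hu' := hu k hk
  have hv' := hv k hk
  refine (h.logSphDeriv_sub_le (hx k) (ball_subset_ball (har k hk) hu')
    (ball_subset_ball (har k hk) hv')).trans ?_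
  have h3 : dist (f^[k] u) (f^[k] v) ≤ 8 * a k := by
    have := dist_triangle_right (f^[k] u) (f^[k] v) (f^[k] x)
    rw [mem_ball] at hu' hv'
    linarith
  calc 2 * C * dist (f^[k] u) (f^[k] v) ≤ 2 * C * (8 * a k) := by gcongr
    _ = 16 * C * a k := by ring

/-- If `δ` is small compared with the inverses of `∑ exp (S_k - S_n)`, where `S` denotes the
Birkhoff sums of `log |f'|` at `x`, then `f^[n]` maps the pull-back of the `δ`-ball at `f^[n] x`
univalently and with bounded distortion onto this ball. -/
lemma ConformalAround.univalent_pullback (h : ConformalAround f J r C) (hf : Continuous f)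
    (hx : ∀ k, f^[k] x ∈ J) {δ : ℝ} (hδ : 0 < δ) (hδ1 : δ ≤ 1)
    (ha : ∀ k, a k = δ * Real.exp (birkhoff f (logSphDeriv f) k x -
      birkhoff f (logSphDeriv f) n x))
    (hsr : 4 * ∑ k ∈ Finset.range n, a k ≤ r)
    (hsC : 16 * C * ∑ k ∈ Finset.range n, a k ≤ Real.log 2) :
    InjOn (f^[n]) (invBranchSet (f^[n]) (ball (f^[n] x) δ) x) ∧
      f^[n] '' invBranchSet (f^[n]) (ball (f^[n] x) δ) x = ball (f^[n] x) δ ∧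
      distortionOn (f^[n]) (invBranchSet (f^[n]) (ball (f^[n] x) δ) x) ≤ 2 := by
  have ha0 : ∀ k, 0 < a k := fun k => by
    rw [ha]
    positivity
  have har : ∀ k < n, 4 * a k ≤ r := fun k hk => by
    have := Finset.single_le_sum (f := a) (fun i _ => (ha0 i).le) (Finset.mem_range.2 hk)
    linarith
  set B := ball (f^[n] x) δ with hB
  set W := shadow f x n a ∩ f^[n] ⁻¹' B with hW
  let W' : Set RSphere := {u | ∀ k < n, f^[k] u ∈ closedBall (f^[k] x) (2 * a k)}
  have hcont := hf.iterate n
  have hxs : x ∈ shadow f x n a := by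
    intro k _
    have : 0 < 4 * a k := mul_pos four_pos (ha0 k)
    exact mem_ball_self this
  have hxB : f^[n] x ∈ B := mem_ball_self hδ
  have hxW : x ∈ W := ⟨hxs, hxB⟩
  have hWopen : IsOpen W := (isOpen_shadow hf x n a).inter (isOpen_ball.preimage hcont)
  have hWW' : W ⊆ W' := by
    intro u hu k hk
    have := h.dist_iterate_le_of_mem_shadow hx (fun k => (ha0 k).le) har hsC hu.1 hxW.1 hk.le
    refine this.trans ?_
    have hun : dist (f^[n] u) (f^[n] x) < δ := hu.2
    calc _ ≤ 2 * Real.exp (birkhoff f (logSphDeriv f) k x - birkhoff f (logSphDeriv f) n x) * δ :=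
          by gcongr
      _ = 2 * a k := by rw [ha]; ring
  have hW'W : ∀ u ∈ W', f^[n] u ∈ B → u ∈ W := by
    refine fun u hu huB => ⟨fun k hk => closedBall_subset_ball ?_ (hu k hk), huB⟩
    have := ha0 k
    linarith
  have hW'cl : IsClosed W' := by
    have : W' = ⋂ k ∈ Iio n, f^[k] ⁻¹' closedBall (f^[k] x) (2 * a k) := by
      ext u
      simp [W']
    rw [this]
    exact isClosed_biInter fun k _ => isClosed_closedBall.preimage (hf.iterate k)
  have hlip : ∀ u ∈ W, ∀ v ∈ W, dist u v ≤ 2 * Real.exp (birkhoff f (logSphDeriv f) 0 x -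
      birkhoff f (logSphDeriv f) n x) * dist (f^[n] u) (f^[n] v) := by
    intro u hu v hv
    have := h.dist_iterate_le_of_mem_shadow hx (fun k => (ha0 k).le) har hsC hu.1 hv.1
      (k := 0) n.zero_le
    rwa [Function.iterate_zero_apply, Function.iterate_zero_apply] at this
  have hinj : InjOn (f^[n]) W := by
    intro u hu v hv huv
    have := hlip u hu v hv
    rw [huv, dist_self, mul_zero] at this
    exact dist_le_zero.1 this
  have hBpre : IsPreconnected B := RSphere.isPreconnected_ball _ hδ1
  have himg : f^[n] '' W = B := by
    refine subset_antisymm (image_subset_iff.2 fun u hu => hu.2) ?_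
    refine IsPreconnected.subset_left_of_subset_union (v := (f^[n] '' W')ᶜ) ?_ ?_ ?_ ?_ ?_ hBpre
    · refine isOpen_iff_mem_nhds.2 ?_
      rintro _ ⟨u, hu, rfl⟩
      exact h.nhds_le_map_iterate
        (fun k hk => ⟨_, hx k, ball_subset_ball (har k hk) (hu.1 k hk)⟩)
        (image_mem_map (hWopen.mem_nhds hu))
    · exact (hW'cl.isCompact.image hcont).isClosed.isOpen_compl
    · exact disjoint_compl_right_iff_subset.2 (image_mono hWW')
    · intro y hy
      by_cases hyW : y ∈ f^[n] '' W'
      · obtain ⟨u, hu, rfl⟩ := hyW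
        exact Or.inl ⟨u, hW'W u hu hy, rfl⟩
      · exact Or.inr hyW
    · exact ⟨f^[n] x, mem_ball_self hδ, x, hxW, rfl⟩
  have hWpre : IsPreconnected W := by
    have : Nonempty RSphere := ⟨x⟩
    have hleft := hinj.leftInvOn_invFunOn
    rw [← hleft.image_image, himg]
    refine hBpre.image _ (LipschitzOnWith.of_dist_le'
      (K := 2 * Real.exp (birkhoff f (logSphDeriv f) 0 x - birkhoff f (logSphDeriv f) n x))
      fun y hy z hz => ?_).continuousOn
    rw [← himg] at hy hz
    obtain ⟨u, hu, rfl⟩ := hy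
    obtain ⟨v, hv, rfl⟩ := hz
    rw [hleft hu, hleft hv]
    exact hlip u hu v hv
  have hcomp : invBranchSet (f^[n]) B x = W := by
    refine subset_antisymm ?_ (hWpre.subset_connectedComponentIn hxW fun u hu => hu.2)
    refine IsPreconnected.subset_left_of_subset_union (v := W'ᶜ) hWopen hW'cl.isOpen_compl
      (disjoint_compl_right_iff_subset.2 hWW') ?_ ⟨x, mem_connectedComponentIn hxW.2, hxW⟩
      isPreconnected_connectedComponentIn
    intro u hu
    by_cases huW : u ∈ W'
    · exact Or.inl (hW'W u huW (connectedComponentIn_subset (f^[n] ⁻¹' B) x hu))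
    · exact Or.inr huW
  rw [hcomp]
  refine ⟨hinj, himg, csSup_le ⟨_, x, hxW, x, hxW, rfl⟩ ?_⟩
  rintro _ ⟨u, hu, v, hv, rfl⟩
  exact h.sphDeriv_iterate_div_le_two hf hx har hsC hu.1 hv.1

end Orbits

/-! ### Good times for sequences of Birkhoff sums -/

lemma sum_exp_neg_mul_le {c : ℝ} (hc : 0 < c) (n : ℕ) :
    ∑ k ∈ Finset.range n, Real.exp (-(c * (n - k))) ≤ Real.exp (-c) / (1 - Real.exp (-c)) := by
  have he : Real.exp (-c) < 1 := Real.exp_lt_one_iff.2 (by linarith)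
  have he' : 0 < 1 - Real.exp (-c) := by linarith
  induction n with
  | zero => simpa using div_nonneg (Real.exp_pos _).le he'.le
  | succ n ih =>
    have h1 : ∑ k ∈ Finset.range (n + 1), Real.exp (-(c * ((n + 1 : ℕ) - k))) =
        (∑ k ∈ Finset.range n, Real.exp (-(c * (n - k))) + 1) * Real.exp (-c) := by
      rw [Finset.sum_range_succ, add_mul, Finset.sum_mul]
      congr 1
      · refine Finset.sum_congr rfl fun k _ => ?_
        rw [← Real.exp_add]
        push_cast
        ring_nf
      · push_cast
        ring_nf
    rw [h1]
    calc _ ≤ (Real.exp (-c) / (1 - Real.exp (-c)) + 1) * Real.exp (-c) := by gcongr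
      _ = _ := by
        field_simp
        ring

lemma sum_Ico_exp_sub_le {a : ℕ → ℝ} {c : ℝ} (hc : 0 < c) {m n : ℕ}
    (h : ∀ k, m ≤ k → k < n → c * (n - k) ≤ a n - a k) :
    ∑ k ∈ Finset.Ico m n, Real.exp (a k - a n) ≤ Real.exp (-c) / (1 - Real.exp (-c)) := by
  refine le_trans ?_ (sum_exp_neg_mul_le hc n)
  calc ∑ k ∈ Finset.Ico m n, Real.exp (a k - a n)
      ≤ ∑ k ∈ Finset.Ico m n, Real.exp (-(c * (n - k))) := by
        refine Finset.sum_le_sum fun k hk => Real.exp_le_exp.2 ?_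
        have := h k (Finset.mem_Ico.1 hk).1 (Finset.mem_Ico.1 hk).2
        linarith
    _ ≤ _ := by
        refine Finset.sum_le_sum_of_subset_of_nonneg ?_ fun _ _ _ => (Real.exp_pos _).le
        intro k hk
        exact Finset.mem_range.2 (Finset.mem_Ico.1 hk).2

lemma exists_record_time {a : ℕ → ℝ} {q : ℝ} (hq : 0 < q)
    (hup : ∀ η > 0, ∀ᶠ n : ℕ in atTop, a n < (q + η) * n)
    (hlow : ∀ η > 0, ∃ᶠ n : ℕ in atTop, (q - η) * n < a n) {η : ℝ} (hη : 0 < η) (N : ℕ) :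
    ∃ n ≥ N, (q - η) * n < a n ∧ a n < (q + η) * n ∧
      ∀ k < n, q / 2 * (n - k) ≤ a n - a k := by
  obtain ⟨η', hη', hηη', hηq⟩ : ∃ η', 0 < η' ∧ η' < η ∧ η' ≤ q / 4 :=
    ⟨min (η / 2) (q / 4), by positivity, (min_le_left _ _).trans_lt (half_lt_self hη),
      min_le_right _ _⟩
  obtain ⟨N₁, hN₁⟩ := eventually_atTop.1 (hup η hη)
  set b : ℕ → ℝ := fun m => a m - q / 2 * m with hb
  obtain ⟨m₀, -, hm₀⟩ := Finset.exists_max_image (Finset.range (N + N₁ + 1)) b ⟨0, by simp⟩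
  have hlarge : ∀ᶠ n : ℕ in atTop, b m₀ < q / 4 * n :=
    (tendsto_natCast_atTop_atTop.const_mul_atTop (by positivity)).eventually_gt_atTop _
  obtain ⟨n, hn, hnb⟩ := ((hlow η' hη').and_eventually hlarge).exists
  obtain ⟨t, htn, ht⟩ := Finset.exists_max_image (Finset.range (n + 1)) b ⟨0, by simp⟩
  have htn' : t ≤ n := Nat.lt_succ_iff.1 (Finset.mem_range.1 htn)
  have hbt := ht n (by simp)
  have hn0 : (0 : ℝ) ≤ n := n.cast_nonneg
  have htN : N + N₁ < t := by
    by_contra! hcon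
    have h1 := hm₀ t (by simpa [Nat.lt_succ_iff] using hcon)
    have h2 : q / 4 * n ≤ (q / 2 - η') * n := by
      gcongr
      linarith
    simp only [hb] at h1 hbt hnb
    linarith
  have hcast : (t : ℝ) ≤ n := by exact_mod_cast htn'
  have ht0 : (0 : ℝ) < t := by exact_mod_cast (Nat.zero_le _).trans_lt htN
  refine ⟨t, by omega, ?_, hN₁ t (by omega), fun k hk => ?_⟩
  · have h3 : (q / 2 - η') * t ≤ (q / 2 - η') * n := by
      gcongr
      linarith
    have h4 : (q - η) * t < (q - η') * t := by
      gcongr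
    simp only [hb] at hbt
    linarith
  · have := ht k (by simp; omega)
    simp only [hb] at this
    linarith

lemma exists_first_crossing_time {a : ℕ → ℝ} {q q₂ L : ℝ} (hq : 0 < q) (hq₂ : q < q₂)
    (haL : ∀ n, a (n + 1) ≤ a n + L)
    (hA : ∀ ε > 0, ∃ A : ℝ, ∀ k n : ℕ, k ≤ n → -ε * (n - k) - A ≤ a n - a k)
    (hup : ∃ᶠ n : ℕ in atTop, q₂ * n < a n)
    (hlow : ∀ q₁ > q, ∃ᶠ n : ℕ in atTop, a n < q₁ * n) {η : ℝ} (hη : 0 < η)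
    (hq₂η : q₂ ≤ q + η / 2) (N : ℕ) :
    ∃ n ≥ N, q * n < a n ∧ a n < (q + η) * n ∧
      ∑ k ∈ Finset.range n, Real.exp (a k - a n) ≤
        Real.exp (-(q / 2)) / (1 - Real.exp (-(q / 2))) + 1 := by
  set ε := (q₂ - q) / 4 with hε
  have hε0 : 0 < ε := by rw [hε]; linarith
  obtain ⟨A, hA⟩ := hA ε hε0
  have hl1 : ∀ᶠ m : ℕ in atTop, L < η / 2 * m :=
    (tendsto_natCast_atTop_atTop.const_mul_atTop (by positivity)).eventually_gt_atTop _
  have hl2 : ∀ᶠ m : ℕ in atTop, m * Real.exp (A - ε * m) ≤ 1 := by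
    have h1 : Tendsto (fun t : ℝ => t ^ 1 * Real.exp (-ε * t)) atTop (𝓝 0) :=
      (isLittleO_pow_exp_pos_mul_atTop (k := 1) hε0).tendsto_div_nhds_zero.congr fun t => by
        rw [neg_mul, Real.exp_neg, div_eq_mul_inv]
    have h2 := (h1.comp tendsto_natCast_atTop_atTop).const_mul (Real.exp A)
    rw [mul_zero] at h2
    filter_upwards [h2.eventually_le_const one_pos] with m hm
    refine le_of_eq_of_le ?_ hm
    simp only [Function.comp, pow_one]
    rw [mul_left_comm, ← Real.exp_add]
    ring_nf
  obtain ⟨m, hm, hmL, hmA, hmN⟩ := ((hlow ((q + q₂) / 2) (by linarith)).and_eventually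
    (hl1.and (hl2.and (eventually_ge_atTop N)))).exists
  have hex : ∃ n, m < n ∧ q₂ * n ≤ a n := by
    obtain ⟨n, hn, hnm⟩ := (hup.and_eventually (eventually_gt_atTop m)).exists
    exact ⟨n, hnm, hn.le⟩
  classical
  obtain ⟨hmn, hn⟩ := Nat.find_spec hex
  have hmin : ∀ k, m ≤ k → k < Nat.find hex → a k ≤ q₂ * k := by
    intro k hmk hk
    rcases hmk.eq_or_lt with rfl | hmk
    · refine hm.le.trans ?_
      gcongr
      linarith
    · have := Nat.find_min hex hk
      push Not at this
      exact (this hmk).le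
  set n := Nat.find hex
  have hcast : (m : ℝ) < n := by exact_mod_cast hmn
  have hm0 : (0 : ℝ) ≤ m := m.cast_nonneg
  have hn0 : (0 : ℝ) < n := hm0.trans_lt hcast
  refine ⟨n, hmN.trans hmn.le, lt_of_lt_of_le (by gcongr) hn, ?_, ?_⟩
  · obtain ⟨j, hj⟩ := Nat.exists_eq_succ_of_ne_zero (Nat.ne_zero_of_lt hmn)
    have h1 := hmin j (by omega) (by omega)
    have h2 := haL j
    rw [← Nat.succ_eq_add_one, ← hj] at h2
    have h3 : (j : ℝ) ≤ n := by exact_mod_cast (by omega : j ≤ n)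
    have h4 : q₂ * j ≤ (q + η / 2) * n := by
      have : 0 < q + η / 2 := by positivity
      gcongr
    have h5 : η / 2 * m ≤ η / 2 * n := by gcongr
    linarith
  · rw [← Finset.sum_range_add_sum_Ico _ hmn.le, add_comm]
    refine add_le_add (sum_Ico_exp_sub_le (half_pos hq) fun k hmk hk => ?_) ?_
    · have h1 := hmin k hmk hk
      have h2 : (k : ℝ) ≤ n := by exact_mod_cast hk.le
      have h3 : q / 2 * (n - k) ≤ q₂ * (n - k) := by
        gcongr
        linarith
      linarith
    · refine le_trans ?_ hmA
      calc ∑ k ∈ Finset.range m, Real.exp (a k - a n)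
          ≤ ∑ _k ∈ Finset.range m, Real.exp (A - ε * m) := by
            refine Finset.sum_le_sum fun k hk => Real.exp_le_exp.2 ?_
            have h1 := hA k m (Finset.mem_range.1 hk).le
            have h2 : q₂ * m ≤ q₂ * n := by
              have := hq.trans hq₂
              gcongr
            have h3 : 0 ≤ ε * k := by positivity
            have h4 : (q + q₂) / 2 * m = q₂ * m - 2 * (ε * m) := by
              rw [hε]
              ring
            linarith
        _ = _ := by simp

/-- For `q > 0` between the lower and upper growth rates of `a`, there are arbitrarily large
times `n` with `a n / n` close to `q` at which the sums `∑ exp (a k - a n)` are bounded in terms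
of `q` only. -/
lemma exists_good_time {a : ℕ → ℝ} {q L : ℝ} (hq : 0 < q)
    (haL : ∀ n, a (n + 1) ≤ a n + L)
    (hA : ∀ ε > 0, ∃ A : ℝ, ∀ k n : ℕ, k ≤ n → -ε * (n - k) - A ≤ a n - a k)
    (hlow : liminf (fun n : ℕ => ((a n / n : ℝ) : EReal)) atTop ≤ q)
    (hup : (q : EReal) ≤ limsup (fun n : ℕ => ((a n / n : ℝ) : EReal)) atTop)
    {η : ℝ} (hη : 0 < η) (N : ℕ) :
    ∃ n ≥ N, |a n / n - q| < η ∧ ∑ k ∈ Finset.range n, Real.exp (a k - a n) ≤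
        Real.exp (-(q / 2)) / (1 - Real.exp (-(q / 2))) + 1 := by
  have hpos : ∀ᶠ n : ℕ in atTop, (0 : ℝ) < n := by
    filter_upwards [eventually_gt_atTop 0] with n hn using by exact_mod_cast hn
  have hlow' : ∀ q₁ > q, ∃ᶠ n : ℕ in atTop, a n < q₁ * n := by
    intro q₁ hq₁
    refine ((frequently_lt_of_liminf_lt (by isBoundedDefault)
      (hlow.trans_lt (EReal.coe_lt_coe_iff.2 hq₁))).and_eventually hpos).mono ?_
    rintro n ⟨hn, hn0⟩
    exact (div_lt_iff₀ hn0).1 (EReal.coe_lt_coe_iff.1 hn)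
  have hup' : ∀ q₁ : ℝ, (q₁ : EReal) < limsup (fun n : ℕ => ((a n / n : ℝ) : EReal)) atTop →
      ∃ᶠ n : ℕ in atTop, q₁ * n < a n := by
    intro q₁ hq₁
    refine ((frequently_lt_of_lt_limsup (by isBoundedDefault) hq₁).and_eventually hpos).mono ?_
    rintro n ⟨hn, hn0⟩
    exact (lt_div_iff₀ hn0).1 (EReal.coe_lt_coe_iff.1 hn)
  suffices H : ∃ n ≥ N + 1, (q - η) * n < a n ∧ a n < (q + η) * n ∧
      ∑ k ∈ Finset.range n, Real.exp (a k - a n) ≤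
        Real.exp (-(q / 2)) / (1 - Real.exp (-(q / 2))) + 1 by
    obtain ⟨n, hn, h1, h2, h3⟩ := H
    have hn0 : (0 : ℝ) < n := by exact_mod_cast (Nat.succ_pos N).trans_le hn
    refine ⟨n, by omega, abs_lt.2 ⟨?_, ?_⟩, h3⟩
    · have := (lt_div_iff₀ hn0).2 h1
      linarith
    · have := (div_lt_iff₀ hn0).2 h2
      linarith
  rcases hup.eq_or_lt with heq | hlt
  · obtain ⟨n, hn, h1, h2, h3⟩ := exists_record_time hq (a := a) (fun η hη => by
      have : limsup (fun n : ℕ => ((a n / n : ℝ) : EReal)) atTop < ((q + η : ℝ) : EReal) := by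
        rw [← heq, EReal.coe_lt_coe_iff]
        linarith
      filter_upwards [eventually_lt_of_limsup_lt this, hpos] with n hn hn0
      exact (div_lt_iff₀ hn0).1 (EReal.coe_lt_coe_iff.1 hn)) (fun η hη => hup' _ (by
        rw [← heq, EReal.coe_lt_coe_iff]
        linarith)) hη (N + 1)
    have h4 := sum_Ico_exp_sub_le (half_pos hq) (m := 0) fun k _ hk => h3 k hk
    rw [← Finset.range_eq_Ico] at h4
    exact ⟨n, hn, h1, h2, by linarith⟩
  · obtain ⟨q₂, hq₂, hq₂'⟩ := EReal.lt_iff_exists_real_btwn.1 hlt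
    have hq₂ := EReal.coe_lt_coe_iff.1 hq₂
    obtain ⟨n, hn, h1, h2, h3⟩ := exists_first_crossing_time hq
      (lt_min hq₂ (by linarith : q < q + η / 2)) haL hA
      (hup' _ (lt_of_le_of_lt (EReal.coe_le_coe_iff.2 (min_le_left _ _)) hq₂')) hlow' hη
      (min_le_right _ _) (N + 1)
    refine ⟨n, hn, lt_of_le_of_lt ?_ h1, h2, h3⟩
    gcongr
    linarith

lemma nonneg_of_liminf_le {a : ℕ → ℝ} {q : ℝ}
    (hA : ∀ ε > 0, ∃ A : ℝ, ∀ n : ℕ, -ε * n - A ≤ a n)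
    (hlow : liminf (fun n : ℕ => ((a n / n : ℝ) : EReal)) atTop ≤ q) : 0 ≤ q := by
  by_contra! hq
  obtain ⟨A, hA⟩ := hA (-q / 4) (by linarith)
  have h1 : ∃ᶠ n : ℕ in atTop, ((a n / n : ℝ) : EReal) < (q / 2 : ℝ) :=
    frequently_lt_of_liminf_lt (by isBoundedDefault)
      (hlow.trans_lt (EReal.coe_lt_coe_iff.2 (by linarith)))
  have h2 : ∀ᶠ n : ℕ in atTop, A < -q / 4 * n :=
    (tendsto_natCast_atTop_atTop.const_mul_atTop (by linarith)).eventually_gt_atTop _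
  obtain ⟨n, hn, hnA, hn0⟩ := (h1.and_eventually (h2.and (eventually_gt_atTop 0))).exists
  have hn1 : (0 : ℝ) < n := by exact_mod_cast hn0
  have h3 := (div_lt_iff₀ hn1).1 (EReal.coe_lt_coe_iff.1 hn)
  have h4 := hA n
  linarith

/-- **Lemma (bounded distortion along good times).**
Assume `J` contains no critical points of `f`. There is `K > 0` (depending only on `f`)
such that for every `q ≠ 0` there is `δ > 0` (depending on `q` but not on the point)
such that for every `x ∈ J` with `χ̄(x) > 0` and `q ∈ [χ̲(x), χ̄(x)]` there is a
sequence `n_k → ∞` with `(1/n_k) log |(f^{n_k})'(x)| → q` such that the inverse branch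
of `f^{n_k}` sending `f^{n_k}(x)` to `x` is defined on `B(f^{n_k}(x), δ)` and the
distortion of `f^{n_k}` on the corresponding pull-back is less than `K`. -/
theorem bounded_distortion_times (f : RSphere → RSphere) (p q : Polynomial ℂ)
    (hf : IsRationalMap f p q) (hdeg : 2 ≤ ratDeg p q)
    (hcrit : juliaSet f ∩ critSet f = ∅) :
    ∃ K : ℝ, 0 < K ∧ ∀ qq : ℝ, qq ≠ 0 → ∃ δ : ℝ, 0 < δ ∧
      ∀ x ∈ juliaSet f, 0 < lyapUpper f x →
        lyapLower f x ≤ (qq : EReal) → (qq : EReal) ≤ lyapUpper f x →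
        ∃ nk : ℕ → ℕ, StrictMono nk ∧
          Tendsto (fun k => Real.log (sphDeriv (f^[nk k]) x) / (nk k : ℝ)) atTop (𝓝 qq) ∧
          ∀ k,
            Set.InjOn (f^[nk k]) (invBranchSet (f^[nk k]) (ball (f^[nk k] x) δ) x) ∧
            (f^[nk k]) '' invBranchSet (f^[nk k]) (ball (f^[nk k] x) δ) x
              = ball (f^[nk k] x) δ ∧
            distortionOn (f^[nk k]) (invBranchSet (f^[nk k]) (ball (f^[nk k] x) δ) x) < K := by
  obtain ⟨r, C, h⟩ := (isCompact_juliaSet f).exists_conformalAround fun x hx =>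
    conformalNear_of_notMem_critSet (hf.isPolyQuotient hdeg) fun hx' =>
      (hcrit.subset ⟨hx, hx'⟩).elim
  have hcont := hf.continuous
  obtain ⟨L, hbd⟩ := h.exists_abs_logSphDeriv_le
  have hC := h.C_nonneg
  have hlog : ∀ x ∈ juliaSet f, ∀ n : ℕ,
      Real.log (sphDeriv (f^[n]) x) = birkhoff f (logSphDeriv f) n x := fun x hx n => by
    rw [h.sphDeriv_iterate hcont fun k _ =>
      ⟨_, (mapsTo_juliaSet hcont).iterate k hx, mem_ball_self h.r_pos⟩, Real.log_exp]
  refine ⟨3, by norm_num, fun qq hqq => ?_⟩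
  rcases hqq.lt_or_gt with hneg | hpos
  · refine ⟨1, one_pos, fun x hx _ hlow _ => ?_⟩
    simp only [lyapLower, hlog x hx] at hlow
    refine absurd (nonneg_of_liminf_le (fun ε hε => ?_) hlow) (not_le.2 hneg)
    obtain ⟨A, hA⟩ := h.exists_le_birkhoff hcont hε
    exact ⟨A, fun n => hA n x hx⟩
  set M := Real.exp (-(qq / 2)) / (1 - Real.exp (-(qq / 2))) + 1 with hM
  have hM0 : 0 < M := by
    have : 0 < 1 - Real.exp (-(qq / 2)) := sub_pos.2 (Real.exp_lt_one_iff.2 (by linarith))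
    positivity
  have hlog2 := Real.log_pos one_lt_two
  obtain ⟨c, hc, hcr, hcC⟩ : ∃ c, 0 < c ∧ 4 * c ≤ r ∧ 16 * C * c ≤ Real.log 2 := by
    have hc : 0 < min (r / 4) (Real.log 2 / (16 * C + 1)) :=
      lt_min (div_pos h.r_pos four_pos) (by positivity)
    refine ⟨_, hc, ?_, ?_⟩
    · linarith [min_le_left (r / 4) (Real.log 2 / (16 * C + 1))]
    · have := (le_div_iff₀ (by positivity)).1 (min_le_right (r / 4) (Real.log 2 / (16 * C + 1)))
      linarith
  have hδ : 0 < min 1 (c / M) := by positivity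
  refine ⟨min 1 (c / M), hδ, fun x hx _ hlow hup => ?_⟩
  have hJ : ∀ k, f^[k] x ∈ juliaSet f := fun k => (mapsTo_juliaSet hcont).iterate k hx
  simp only [lyapLower, lyapUpper, hlog x hx] at hlow hup
  have hgood := fun (η : ℝ) (hη : 0 < η) (N : ℕ) => exists_good_time hpos
    (a := fun n => birkhoff f (logSphDeriv f) n x) (L := L) (fun n => by
      rw [birkhoff_succ]
      linarith [(abs_le.1 (hbd _ (hJ n))).2])
    (fun ε hε => by
      obtain ⟨A, hA⟩ := h.exists_le_birkhoff hcont hε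
      refine ⟨A, fun k n hkn => ?_⟩
      obtain ⟨m, rfl⟩ := Nat.exists_eq_add_of_le hkn
      rw [birkhoff_add]
      push_cast
      linarith [hA m _ (hJ k)]) hlow hup hη N
  obtain ⟨nk, hmono, hnk⟩ := extraction_forall_of_frequently
    (P := fun k n => |birkhoff f (logSphDeriv f) n x / n - qq| < 1 / ((k : ℝ) + 1) ∧
      ∑ k ∈ Finset.range n, Real.exp (birkhoff f (logSphDeriv f) k x -
        birkhoff f (logSphDeriv f) n x) ≤ M)
    fun k => frequently_atTop.2 (hgood _ Nat.one_div_pos_of_nat)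
  refine ⟨nk, hmono, ?_, fun k => ?_⟩
  · simp only [hlog x hx]
    rw [tendsto_iff_dist_tendsto_zero]
    exact squeeze_zero (fun _ => dist_nonneg) (fun k => (hnk k).1.le)
      tendsto_one_div_add_atTop_nhds_zero_nat
  · have hsum : ∑ i ∈ Finset.range (nk k), min 1 (c / M) * Real.exp
        (birkhoff f (logSphDeriv f) i x - birkhoff f (logSphDeriv f) (nk k) x) ≤ c := by
      rw [← Finset.mul_sum]
      calc _ ≤ c / M * M := mul_le_mul (min_le_right _ _) (hnk k).2
              (Finset.sum_nonneg fun _ _ => (Real.exp_pos _).le) (by positivity)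
        _ = c := div_mul_cancel₀ _ hM0.ne'
    obtain ⟨h1, h2, h3⟩ := h.univalent_pullback hcont hJ hδ (min_le_left _ _) (fun _ => rfl)
      (by linarith) ((mul_le_mul_of_nonneg_left hsum (by positivity)).trans hcC)
    exact ⟨h1, h2, h3.trans_lt (by norm_num)⟩
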